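/- Let λ=(λ_1,...,λ_g) be the partition associated to a gap sequence G of genus g, let ξ_μ ∈ ℂ be arbitrary scalars for partitions μ with λ < μ, and let τ(t) = s_λ(t) + Σ_{λ<μ} ξ_μ s_μ(t). For 0 ≤ k ≤ g define τ^{(k)}(t) = s_{(λ_1,...,λ_k)}(t) + Σ_μ ξ_μ s_{(μ_1,...,μ_k)}(t), the sum over partitions μ=(μ_1,...,μ_g) with λ < μ and μ_i = λ_i for k+1 ≤ i ≤ g (τ^{(0)} = 1, τ^{(g)} = τ). Then: (i) ∂_{a^{(k)}_1}⋯∂_{a^{(k)}_{m_k}} τ(t) evaluated at t = [x_1]+⋯+[x_k] equals c_k · τ^{(k)}([x_1]+⋯+[x_k]) as formal power series in x_1,...,x_k, where c_k ∈ {±1} is the sign of the permutation of (g−k−1,...,1,0) given by (w_1^*,...,w_{m_k}^*, w_{g−k−m_k},...,w_1), with c_g = 1 and the empty derivative for k = g; (ii) for 1 ≤ k ≤ g, τ^{(k)}([x_1]+⋯+[x_k]) = τ^{(k−1)}([x_1]+⋯+[x_{k−1}])·x_k^{λ_k} + O(x_k^{λ_k+1}), i.e., the coefficients of x_k^j vanish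 for j < λ_k and the coefficient of x_k^{λ_k} is τ^{(k−1)}([x_1]+⋯+[x_{k−1}]). -/

import Mathlib

open MvPolynomial

noncomputable def pS (n : ℕ) : MvPolynomial ℕ ℂ :=
  ∑ m ∈ Finset.range (n + 1), (Nat.factorial m : ℂ)⁻¹ •
    ∑ c ∈ Finset.univ.filter
        (fun c : Fin m → Fin (n + 1) =>
          (∑ j, ((c j : ℕ))) = n ∧ ∀ j, 1 ≤ (c j : ℕ)),
      ∏ j, X ((c j : ℕ))

noncomputable def pz (n : ℤ) : MvPolynomial ℕ ℂ :=
  if 0 ≤ n then pS n.toNat else 0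

noncomputable def schur {l : ℕ} (lam : Fin l → ℕ) : MvPolynomial ℕ ℂ :=
  Matrix.det (Matrix.of fun a b : Fin l =>
    pz ((lam a : ℤ) - ((a : ℕ) : ℤ) + ((b : ℕ) : ℤ)))

def pad {l : ℕ} (lam : Fin l → ℕ) (a : ℕ) : ℕ := if h : a < l then lam ⟨a, h⟩ else 0

/-- A partition: an antitone, eventually-zero sequence of naturals
(`toFun a` is `λ_{a+1}`, i.e. 0-indexed). -/
structure Ptn where
  toFun : ℕ → ℕ
  anti : ∀ i j : ℕ, i ≤ j → toFun j ≤ toFun i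
  bdd : ∃ N, toFun N = 0

/-- The length (number of nonzero parts) of a partition. -/
noncomputable def Ptn.len (μ : Ptn) : ℕ := Nat.find μ.bdd

/-- The Schur function of a partition. -/
noncomputable def Ptn.schurP (μ : Ptn) : MvPolynomial ℕ ℂ :=
  schur (fun a : Fin μ.len => μ.toFun a)

/-- `λ < μ` in the componentwise order, `λ` given as a finite tuple padded by zeros. -/
def PtnGt {l : ℕ} (lam : Fin l → ℕ) (μ : Ptn) : Prop :=
  (∀ i, pad lam i ≤ μ.toFun i) ∧ (∃ i, pad lam i ≠ μ.toFun i)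

/-- The coefficients (as a formal power series in `t`) of
`τ(t) = s_λ(t) + Σ_{λ<μ} ξ_μ s_μ(t)`. -/
noncomputable def tauCoeff {l : ℕ} (lam : Fin l → ℕ) (ξ : Ptn → ℂ) (β : ℕ →₀ ℕ) : ℂ :=
  MvPolynomial.coeff β (schur lam)
    + ∑ᶠ (μ : Ptn) (_ : PtnGt lam μ), ξ μ * MvPolynomial.coeff β μ.schurP

/-- The coefficients of
`τ^{(k)}(t) = s_{(λ_1,...,λ_k)}(t) + Σ_μ ξ_μ s_{(μ_1,...,μ_k)}(t)`,
the sum over partitions `μ` with `λ < μ` and `μ_i = λ_i` for `i ≥ k+1`. -/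
noncomputable def tauKCoeff {l : ℕ} (lam : Fin l → ℕ) (ξ : Ptn → ℂ) (k : ℕ)
    (β : ℕ →₀ ℕ) : ℂ :=
  MvPolynomial.coeff β (schur (fun a : Fin k => pad lam a))
    + ∑ᶠ (μ : Ptn) (_ : PtnGt lam μ ∧ ∀ i, k ≤ i → μ.toFun i = pad lam i),
        ξ μ * MvPolynomial.coeff β (schur (fun a : Fin k => μ.toFun a))

/-- Formal partial derivative `∂_i` on coefficient functions of power series in `t`. -/
noncomputable def pdCoeff (i : ℕ) (F : (ℕ →₀ ℕ) → ℂ) (β : ℕ →₀ ℕ) : ℂ :=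
  ((β i : ℕ) + 1 : ℂ) * F (β + Finsupp.single i 1)

/-- Iterated formal derivative `∂_{i_1} ⋯ ∂_{i_r}` for `L = [i_1,...,i_r]`. -/
noncomputable def derivsCoeff (L : List ℕ) (F : (ℕ →₀ ℕ) → ℂ) : (ℕ →₀ ℕ) → ℂ :=
  L.foldr pdCoeff F

/-- The power sum `(x_1^n + ⋯ + x_k^n)/n`. -/
noncomputable def psumC (k : ℕ) (n : ℕ) : MvPolynomial (Fin k) ℂ :=
  (n : ℂ)⁻¹ • ∑ i : Fin k, X i ^ n

/-- The coefficient of the monomial `γ` (in `x_1,...,x_k`) of a formal series in `t`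
(given by its coefficient function `F`) after the substitution `t_n ↦ (x_1^n+⋯+x_k^n)/n`. -/
noncomputable def evalPS (k : ℕ) (F : (ℕ →₀ ℕ) → ℂ) (γ : Fin k →₀ ℕ) : ℂ :=
  ∑ᶠ β : (ℕ →₀ ℕ), F β * MvPolynomial.coeff γ (∏ n ∈ β.support, psumC k n ^ β n)

/-- `w_i`: the `(i+1)`-st smallest element of `G` (0-indexed: `wseq G 0 = w_1`). -/
def wseq (G : Finset ℕ) (i : ℕ) : ℕ := (G.sort (· ≤ ·)).getD i 0

/-- `w_i^*`: the `(i+1)`-st smallest element of the complement of `G`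
(0-indexed: `wstar G 0 = w_1^* = 0`). -/
noncomputable def wstar (G : Finset ℕ) (i : ℕ) : ℕ := Nat.nth (fun n => n ∉ G) i

/-- `m_k = #{i : w_i^* < g - k}`, the number of non-gaps below `g - k`. -/
def gapm (G : Finset ℕ) (g k : ℕ) : ℕ :=
  ((Finset.range (g - k)).filter (fun n => n ∉ G)).card

/-- `a^{(k)}_{j+1} = w_{g-k-j} - w_{j+1}^*` (0-indexed in `j`, `0 ≤ j < m_k`). -/
noncomputable def gapa (G : Finset ℕ) (g k j : ℕ) : ℕ :=
  wseq G (g - k - j - 1) - wstar G j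

/-- The partition associated to the gap sequence `G`:
`λ = (w_g, ..., w_1) - (g-1, ..., 1, 0)`, i.e. `λ_{a+1} = w_{g-a} - (g-1-a)` (0-indexed `a`). -/
def gapPart (G : Finset ℕ) (g a : ℕ) : ℕ := wseq G (g - 1 - a) - (g - 1 - a)

noncomputable def genT : PowerSeries (MvPolynomial ℕ ℂ) :=
  PowerSeries.mk fun n => if n = 0 then 0 else X n

lemma coeff_genT_pow (n m : ℕ) :
    PowerSeries.coeff n (genT ^ m) = ∑ c ∈ Finset.univ.filter
        (fun c : Fin m → Fin (n + 1) => (∑ j, ((c j : ℕ))) = n ∧ ∀ j, 1 ≤ (c j : ℕ)),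
      ∏ j, (X ((c j : ℕ)) : MvPolynomial ℕ ℂ) := by
  have h1 : PowerSeries.coeff n (genT ^ m)
      = ((PowerSeries.trunc (n + 1) genT) ^ m).coeff n := by
    have h := PowerSeries.trunc_trunc_pow genT (n + 1) m
    have h' := congrArg (fun p => Polynomial.coeff p n) h
    simp only [PowerSeries.coeff_trunc, Nat.lt_succ_self, if_true] at h'
    rw [← h', ← Polynomial.coe_pow, Polynomial.coeff_coe]
  rw [h1, PowerSeries.trunc_apply, ← Finset.range_eq_Ico, Finset.sum_range, Fintype.sum_pow,
    Polynomial.finsetSum_coeff, Finset.sum_filter]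
  apply Finset.sum_congr rfl
  intro c _
  have h2 : ∏ i, Polynomial.monomial (c i : ℕ) (PowerSeries.coeff (c i : ℕ) genT)
      = Polynomial.C (∏ i, PowerSeries.coeff (c i : ℕ) genT) * Polynomial.X ^ (∑ i, (c i : ℕ)) := by
    rw [map_prod, ← Finset.prod_pow_eq_pow_sum, ← Finset.prod_mul_distrib]
    exact Finset.prod_congr rfl fun i _ => (Polynomial.C_mul_X_pow_eq_monomial).symm
  rw [h2, Polynomial.coeff_C_mul_X_pow]
  by_cases hs : ∑ i, (c i : ℕ) = n
  · by_cases hp : ∀ j, 1 ≤ (c j : ℕ)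
    · rw [if_pos hs.symm, if_pos ⟨hs, hp⟩]
      refine Finset.prod_congr rfl fun i _ => ?_
      have := hp i
      rw [genT, PowerSeries.coeff_mk, if_neg (by omega)]
    · rw [if_pos hs.symm, if_neg (fun h => hp h.2)]
      push Not at hp
      obtain ⟨j, hj⟩ := hp
      refine Finset.prod_eq_zero (Finset.mem_univ j) ?_
      rw [genT, PowerSeries.coeff_mk, if_pos (by omega)]
  · rw [if_neg (fun h => hs h.symm), if_neg (fun h => hs h.1)]

lemma pS_eq_sum_coeff_genT_pow (n : ℕ) :
    pS n = ∑ m ∈ Finset.range (n + 1),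
      (Nat.factorial m : ℂ)⁻¹ • PowerSeries.coeff n (genT ^ m) := by
  simp only [coeff_genT_pow, pS]

lemma coeff_genT_pow_of_lt {n m : ℕ} (h : n < m) : PowerSeries.coeff n (genT ^ m) = 0 := by
  refine PowerSeries.coeff_of_lt_order _ (lt_of_lt_of_le (by exact_mod_cast h)
    (PowerSeries.le_order_pow_of_constantCoeff_eq_zero m ?_))
  simp [genT, ← PowerSeries.coeff_zero_eq_constantCoeff_apply]

lemma pS_eq_sum_range {n M : ℕ} (h : n < M) :
    pS n = ∑ m ∈ Finset.range M,
      (Nat.factorial m : ℂ)⁻¹ • PowerSeries.coeff n (genT ^ m) := by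
  rw [pS_eq_sum_coeff_genT_pow]
  refine Finset.sum_subset (by simpa using h) fun m _ hm => ?_
  rw [coeff_genT_pow_of_lt (by simpa using hm), smul_zero]

lemma pS_zero : pS 0 = 1 := by simp [pS_eq_sum_coeff_genT_pow]

/-- Newton's identity `(n+1) p_{n+1} = ∑ (i+1) t_{i+1} p_{n-i}`. -/
lemma derivative_mk_pS :
    PowerSeries.derivative (MvPolynomial ℕ ℂ) (PowerSeries.mk pS)
      = PowerSeries.derivative (MvPolynomial ℕ ℂ) genT * PowerSeries.mk pS := by
  ext1 n
  rw [PowerSeries.coeff_derivative, PowerSeries.coeff_mk, PowerSeries.coeff_mul,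
    pS_eq_sum_range (Nat.lt_succ_self (n + 1)), Finset.sum_mul]
  have hR : ∀ p ∈ Finset.HasAntidiagonal.antidiagonal n,
      PowerSeries.coeff p.1 (PowerSeries.derivative (MvPolynomial ℕ ℂ) genT)
        * PowerSeries.coeff p.2 (PowerSeries.mk pS)
      = ∑ m ∈ Finset.range (n + 1), (Nat.factorial m : ℂ)⁻¹ •
        (PowerSeries.coeff p.1 (PowerSeries.derivative (MvPolynomial ℕ ℂ) genT)
          * PowerSeries.coeff p.2 (genT ^ m)) := by
    intro p hp
    have := Finset.HasAntidiagonal.mem_antidiagonal.mp hp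
    rw [PowerSeries.coeff_mk, pS_eq_sum_range (show p.2 < n + 1 by omega), Finset.mul_sum]
    simp
  rw [Finset.sum_congr rfl hR, Finset.sum_comm, Finset.sum_range_succ']
  simp only [← Finset.smul_sum, ← PowerSeries.coeff_mul]
  have h0 : PowerSeries.coeff (n + 1) (genT ^ 0) = 0 := by
    rw [pow_zero, PowerSeries.coeff_one, if_neg (by omega)]
  rw [h0, smul_zero, zero_mul, add_zero]
  refine Finset.sum_congr rfl fun m _ => ?_
  rw [smul_mul_assoc]
  have := PowerSeries.coeff_derivative (R := MvPolynomial ℕ ℂ) (genT ^ (m + 1)) n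
  rw [← this, PowerSeries.derivative_pow, Nat.add_sub_cancel, mul_assoc, mul_comm (genT ^ m),
    Nat.factorial_succ]
  have h3 : ((m + 1 : ℕ) : PowerSeries (MvPolynomial ℕ ℂ))
      = PowerSeries.C (MvPolynomial.C ((m + 1 : ℕ) : ℂ)) := by simp
  rw [h3, PowerSeries.coeff_C_mul, MvPolynomial.C_mul', smul_smul]
  congr 1
  have : ((m + 1 : ℕ) : ℂ) ≠ 0 := by exact_mod_cast Nat.succ_ne_zero m
  push_cast at this ⊢
  field_simp

lemma coeff_derivative_genT (n : ℕ) :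
    PowerSeries.coeff n (PowerSeries.derivative (MvPolynomial ℕ ℂ) genT)
      = X (n + 1) * ((n : MvPolynomial ℕ ℂ) + 1) := by
  rw [PowerSeries.coeff_derivative, genT, PowerSeries.coeff_mk, if_neg (by omega)]

lemma pz_natCast (n : ℕ) : pz (n : ℤ) = pS n := by simp [pz]

lemma pz_of_neg {n : ℤ} (h : n < 0) : pz n = 0 := by simp [pz, h]

/-- Newton's identity for the elementary Schur polynomials. -/
lemma pS_succ_mul (n : ℕ) :
    pS (n + 1) * ((n : MvPolynomial ℕ ℂ) + 1)
      = ∑ i ∈ Finset.range (n + 1),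
        X (i + 1) * ((i : MvPolynomial ℕ ℂ) + 1) * pS (n - i) := by
  have h := congrArg (PowerSeries.coeff n) derivative_mk_pS
  rw [PowerSeries.coeff_derivative, PowerSeries.coeff_mk, PowerSeries.coeff_mul,
    Finset.Nat.sum_antidiagonal_eq_sum_range_succ_mk] at h
  simpa only [coeff_derivative_genT, PowerSeries.coeff_mk] using h

lemma pderiv_pS (a : ℕ) (ha : 1 ≤ a) (n : ℕ) :
    pderiv a (pS n) = pz ((n : ℤ) - a) := by
  induction n using Nat.strong_induction_on with
  | _ n ih =>
  rcases n with _ | n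
  · rw [pS_zero, pz_of_neg (by push_cast; omega)]
    simp
  have hcast : ∀ j : ℕ, pderiv a ((j : MvPolynomial ℕ ℂ) + 1) = 0 := by
    intro j
    have : ((j : MvPolynomial ℕ ℂ) + 1) = C ((j : ℂ) + 1) := by simp
    rw [this, pderiv_C]
  have h := congrArg (pderiv a) (pS_succ_mul n)
  rw [Derivation.leibniz, hcast, smul_zero, zero_add, smul_eq_mul, map_sum] at h
  have hterm : ∀ i ∈ Finset.range (n + 1),
      pderiv a (X (i + 1) * ((i : MvPolynomial ℕ ℂ) + 1) * pS (n - i))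
        = X (i + 1) * ((i : MvPolynomial ℕ ℂ) + 1) * pz ((n : ℤ) - i - a)
          + (if i + 1 = a then (a : MvPolynomial ℕ ℂ) * pz ((n : ℤ) + 1 - a) else 0) := by
    intro i hi
    have hi' : i ≤ n := by simpa [Nat.lt_succ_iff] using hi
    rw [Derivation.leibniz, Derivation.leibniz, hcast, ih (n - i) (by omega), pderiv_X]
    simp only [smul_eq_mul]
    rw [Nat.cast_sub hi', mul_zero, zero_add]
    congr 1
    by_cases hia : i + 1 = a
    · subst hia
      rw [if_pos rfl, Pi.single_eq_same]
      have : (n : ℤ) + 1 - ((i + 1 : ℕ) : ℤ) = ((n - i : ℕ) : ℤ) := by omega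
      rw [this, pz_natCast]
      push_cast
      ring
    · rw [if_neg hia, Pi.single_eq_of_ne hia]
      simp
  rw [Finset.sum_congr rfl hterm, Finset.sum_add_distrib] at h
  have hne : ((n : MvPolynomial ℕ ℂ) + 1) ≠ 0 := by
    exact_mod_cast Nat.succ_ne_zero n
  apply mul_left_cancel₀ hne
  rw [h]
  push_cast
  by_cases han : a ≤ n + 1
  · obtain ⟨d, hd⟩ := Nat.exists_eq_add_of_le han
    have e1 : (n : ℤ) + 1 - a = (d : ℕ) := by omega
    have s2 : ∑ i ∈ Finset.range (n + 1),
        (if i + 1 = a then (a : MvPolynomial ℕ ℂ) * pz ((n : ℤ) + 1 - a) else 0)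
          = (a : MvPolynomial ℕ ℂ) * pz ((n : ℤ) + 1 - a) := by
      rw [Finset.sum_eq_single (a - 1)]
      · rw [if_pos (by omega)]
      · intro b _ hb
        rw [if_neg (by omega)]
      · intro hb
        exact absurd (Finset.mem_range.mpr (by omega)) hb
    have s1 : ∑ i ∈ Finset.range (n + 1),
        X (i + 1) * ((i : MvPolynomial ℕ ℂ) + 1) * pz ((n : ℤ) - i - a)
          = (d : MvPolynomial ℕ ℂ) * pz ((n : ℤ) + 1 - a) := by
      have hsub : Finset.range d ⊆ Finset.range (n + 1) := by
        intro x hx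
        simp only [Finset.mem_range] at hx ⊢
        omega
      rw [← Finset.sum_subset hsub]
      · rw [e1, pz_natCast]
        rcases d with _ | d
        · simp
        · have hh := pS_succ_mul d
          rw [mul_comm] at hh
          push_cast
          rw [hh]
          refine Finset.sum_congr rfl fun i hi => ?_
          have hi := Finset.mem_range.mp hi
          rw [show (n : ℤ) - i - a = ((d - i : ℕ) : ℤ) by omega, pz_natCast]
      · intro x _ hx
        have hx : d ≤ x := by simpa using hx
        rw [pz_of_neg (by omega), mul_zero]
    rw [s1, s2, ← add_mul]
    congr 1
    have : ((n + 1 : ℕ) : MvPolynomial ℕ ℂ) = ((a + d : ℕ) : MvPolynomial ℕ ℂ) := by rw [hd]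
    push_cast at this
    rw [this]; ring
  · rw [pz_of_neg (show (n : ℤ) + 1 - a < 0 by omega)]
    simp only [mul_zero, ite_self, Finset.sum_const_zero, add_zero]
    refine Finset.sum_eq_zero fun i _ => ?_
    rw [pz_of_neg (by omega), mul_zero]

lemma pderiv_pz (a : ℕ) (ha : 1 ≤ a) (n : ℤ) : pderiv a (pz n) = pz (n - a) := by
  rcases lt_or_ge n 0 with h | h
  · rw [pz_of_neg h, pz_of_neg (by omega), map_zero]
  · lift n to ℕ using h
    rw [pz_natCast, pderiv_pS a ha]

/-- The determinant `det (p_{b_i - (l-1) + j})` attached to the shifted parts `b`. -/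
noncomputable def betaDet {l : ℕ} (b : Fin l → ℤ) : MvPolynomial ℕ ℂ :=
  Matrix.det (Matrix.of fun i j : Fin l => pz (b i - ((l : ℤ) - 1) + (j : ℕ)))

lemma schur_eq_betaDet {l : ℕ} (lam : Fin l → ℕ) :
    schur lam = betaDet fun i => (lam i : ℤ) + ((l : ℤ) - 1) - (i : ℕ) := by
  unfold schur betaDet
  congr 2
  ext1 i
  ext1 j
  congr 1
  ring

lemma pderiv_prod {ι : Type*} [DecidableEq ι] (a : ℕ) (s : Finset ι)
    (f : ι → MvPolynomial ℕ ℂ) :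
    pderiv a (∏ i ∈ s, f i) = ∑ i ∈ s, ∏ j ∈ s, if j = i then pderiv a (f j) else f j := by
  induction s using Finset.induction_on with
  | empty => simp
  | insert x s hx ih =>
    rw [Finset.prod_insert hx, Derivation.leibniz, ih, Finset.sum_insert hx, Finset.prod_insert hx,
      if_pos rfl, smul_eq_mul, smul_eq_mul, add_comm, Finset.mul_sum]
    congr 1
    · rw [mul_comm]
      congr 1
      refine Finset.prod_congr rfl fun j hj => ?_
      rw [if_neg (fun h : j = x => hx (h ▸ hj))]
    · refine Finset.sum_congr rfl fun i hi => ?_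
      rw [Finset.prod_insert hx, if_neg (fun h : x = i => hx (h ▸ hi))]

lemma pderiv_betaDet {l : ℕ} (a : ℕ) (ha : 1 ≤ a) (b : Fin l → ℤ) :
    pderiv a (betaDet b) = ∑ i, betaDet fun r => b r - if r = i then (a : ℤ) else 0 := by
  simp only [betaDet, ← Matrix.det_transpose (Matrix.of _), Matrix.det_apply, map_sum,
    Matrix.transpose_apply, Matrix.of_apply]
  rw [Finset.sum_comm]
  refine Finset.sum_congr rfl fun σ _ => ?_
  have hs : ∀ p : MvPolynomial ℕ ℂ,
      pderiv a (Equiv.Perm.sign σ • p) = Equiv.Perm.sign σ • pderiv a p := by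
    intro p
    rcases Int.units_eq_one_or (Equiv.Perm.sign σ) with h | h <;> rw [h] <;> simp
  rw [hs, pderiv_prod, Finset.smul_sum]
  refine Finset.sum_congr rfl fun i _ => ?_
  congr 1
  refine Finset.prod_congr rfl fun j _ => ?_
  split_ifs with h
  · rw [pderiv_pz a ha]
    congr 1
    ring
  · congr 1
    ring

lemma foldr_pderiv_sum {ι : Type*} (l : List ℕ) (s : Finset ι) (f : ι → MvPolynomial ℕ ℂ) :
    l.foldr (fun i p => pderiv i p) (∑ x ∈ s, f x)
      = ∑ x ∈ s, l.foldr (fun i p => pderiv i p) (f x) := by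
  induction l with
  | nil => rfl
  | cons y l ih => simp [ih]

lemma foldr_pderiv_betaDet {l : ℕ} (a : ℕ → ℕ) (m : ℕ) (ha : ∀ j < m, 1 ≤ a j)
    (b : Fin l → ℤ) :
    ((List.range m).map a).foldr (fun i p => pderiv i p) (betaDet b)
      = ∑ f : Fin m → Fin l,
          betaDet fun r => b r - ∑ j : Fin m, if r = f j then (a j : ℤ) else 0 := by
  induction m generalizing b with
  | zero => simp
  | succ m ih =>
    rw [List.range_succ, List.map_append, List.foldr_append]
    simp only [List.map_cons, List.map_nil, List.foldr_cons, List.foldr_nil]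
    rw [pderiv_betaDet _ (ha m (by omega)), foldr_pderiv_sum]
    rw [← (Fin.snocEquiv (fun _ => Fin l)).sum_comp, Fintype.sum_prod_type]
    refine Finset.sum_congr rfl fun i _ => ?_
    rw [ih (fun j hj => ha j (by omega))]
    refine Finset.sum_congr rfl fun f _ => ?_
    congr 1
    ext1 r
    rw [Fin.sum_univ_castSucc]
    simp [Fin.snocEquiv]
    ring

/-- Substitution `t_n ↦ (x_1^n + ⋯ + x_k^n) / n`. -/
noncomputable def substPsum (k : ℕ) : MvPolynomial ℕ ℂ →ₐ[ℂ] MvPolynomial (Fin k) ℂ :=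
  aeval (psumC k)

/-- The complete homogeneous symmetric polynomial `h_n(x_1, ..., x_k)`, for `n : ℤ`. -/
noncomputable def hz (k : ℕ) (n : ℤ) : MvPolynomial (Fin k) ℂ := substPsum k (pz n)

lemma hz_of_neg (k : ℕ) {n : ℤ} (h : n < 0) : hz k n = 0 := by
  rw [hz, pz_of_neg h, map_zero]

lemma hz_zero (k : ℕ) : hz k 0 = 1 := by
  have := pz_natCast 0
  rw [Nat.cast_zero] at this
  rw [hz, this, pS_zero, map_one]

/-- The polynomial `∏ (1 - x_i T)`. -/
noncomputable def ePoly (k : ℕ) : Polynomial (MvPolynomial (Fin k) ℂ) :=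
  ∏ i : Fin k, (1 - Polynomial.C (X i) * Polynomial.X)

lemma ePoly_coeff_zero (k : ℕ) : (ePoly k).coeff 0 = 1 := by
  simp [ePoly, Polynomial.coeff_zero_prod]

lemma natDegree_ePoly_factor {k : ℕ} (i : Fin k) :
    (1 - Polynomial.C (X i : MvPolynomial (Fin k) ℂ) * Polynomial.X).natDegree ≤ 1 := by
  refine (Polynomial.natDegree_sub_le _ _).trans ?_
  rw [Polynomial.natDegree_one]
  exact max_le (by omega) (Polynomial.natDegree_C_mul_le _ _ |>.trans Polynomial.natDegree_X_le)

lemma ePoly_coeff_top (k : ℕ) : (ePoly k).coeff k = (-1) ^ k * ∏ i, X i := by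
  have h := Polynomial.coeff_prod_of_natDegree_le (s := (Finset.univ : Finset (Fin k)))
    (fun i => 1 - Polynomial.C (X i : MvPolynomial (Fin k) ℂ) * Polynomial.X) 1
    (fun i _ => natDegree_ePoly_factor i)
  rw [Finset.card_univ, Fintype.card_fin, mul_one] at h
  rw [ePoly, h]
  simp [Polynomial.coeff_one, Finset.prod_neg]

lemma derivative_prod_one_sub {k : ℕ} (s : Finset (Fin k)) :
    PowerSeries.derivative (MvPolynomial (Fin k) ℂ)
        (∏ i ∈ s, (1 - PowerSeries.C (X i) * PowerSeries.X))
      = -(PowerSeries.mk fun n => ∑ i ∈ s, (X i : MvPolynomial (Fin k) ℂ) ^ (n + 1))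
        * ∏ i ∈ s, (1 - PowerSeries.C (X i) * PowerSeries.X) := by
  induction s using Finset.induction_on with
  | empty =>
    have : (PowerSeries.mk fun _ => 0 : PowerSeries (MvPolynomial (Fin k) ℂ)) = 0 := by
      ext1 n; simp
    simp [this]
  | insert x s hx ih =>
    have hb : PowerSeries.derivative (MvPolynomial (Fin k) ℂ)
        (1 - PowerSeries.C (X x) * PowerSeries.X)
        = -(PowerSeries.mk fun n => (X x : MvPolynomial (Fin k) ℂ) ^ (n + 1))
          * (1 - PowerSeries.C (X x) * PowerSeries.X) := by
      have e1 : (PowerSeries.mk fun n => (X x : MvPolynomial (Fin k) ℂ) ^ (n + 1))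
          * (1 - PowerSeries.C (X x) * PowerSeries.X) = PowerSeries.C (X x) := by
        ext1 n
        rw [mul_sub, mul_one, mul_comm (PowerSeries.C _), ← mul_assoc, map_sub,
          PowerSeries.coeff_mk, PowerSeries.coeff_mul_C, PowerSeries.coeff_C]
        rcases n with _ | n
        · simp
        · rw [PowerSeries.coeff_succ_mul_X, PowerSeries.coeff_mk, if_neg (by omega)]
          ring
      rw [neg_mul, e1, map_sub, Derivation.leibniz]
      simp [PowerSeries.derivative_C]
    have hm : (PowerSeries.mk fun n => ∑ i ∈ insert x s, (X i : MvPolynomial (Fin k) ℂ) ^ (n + 1))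
        = (PowerSeries.mk fun n => (X x : MvPolynomial (Fin k) ℂ) ^ (n + 1))
          + PowerSeries.mk fun n => ∑ i ∈ s, (X i : MvPolynomial (Fin k) ℂ) ^ (n + 1) := by
      ext1 n
      simp [Finset.sum_insert hx]
    rw [Finset.prod_insert hx, Derivation.leibniz, ih, hb, hm, smul_eq_mul, smul_eq_mul]
    ring

lemma ePoly_coe (k : ℕ) : (ePoly k : PowerSeries (MvPolynomial (Fin k) ℂ))
    = ∏ i : Fin k, (1 - PowerSeries.C (X i) * PowerSeries.X) := by
  rw [ePoly, ← Polynomial.coeToPowerSeries.ringHom_apply, map_prod]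
  simp

lemma derivative_mk_hz (k : ℕ) :
    PowerSeries.derivative (MvPolynomial (Fin k) ℂ) (PowerSeries.mk fun n : ℕ => hz k n)
      = (PowerSeries.mk fun n => ∑ i : Fin k, (X i : MvPolynomial (Fin k) ℂ) ^ (n + 1))
        * PowerSeries.mk fun n : ℕ => hz k n := by
  ext1 n
  have h := congrArg (substPsum k) (pS_succ_mul n)
  rw [PowerSeries.coeff_derivative, PowerSeries.coeff_mk, PowerSeries.coeff_mul,
    Finset.Nat.sum_antidiagonal_eq_sum_range_succ_mk]
  simp only [PowerSeries.coeff_mk, hz, pz_natCast]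
  rw [map_mul, map_add, map_one, map_natCast, map_sum] at h
  rw [h]
  refine Finset.sum_congr rfl fun i _ => ?_
  rw [map_mul]
  congr 1
  rw [map_mul, map_add, map_one, map_natCast, substPsum, aeval_X, psumC]
  have : ((i : MvPolynomial (Fin k) ℂ) + 1) = C ((i + 1 : ℕ) : ℂ) := by simp
  rw [this, mul_comm, C_mul', smul_smul, mul_inv_cancel₀, one_smul]
  exact_mod_cast Nat.succ_ne_zero i

lemma ePoly_mul_mk_hz (k : ℕ) :
    (ePoly k : PowerSeries (MvPolynomial (Fin k) ℂ))
      * (PowerSeries.mk fun n : ℕ => hz k n) = 1 := by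
  apply PowerSeries.derivative.ext
  · rw [Derivation.leibniz, derivative_mk_hz, ePoly_coe, derivative_prod_one_sub,
      PowerSeries.derivative_one, smul_eq_mul, smul_eq_mul]
    ring
  · rw [map_mul, map_one, ← PowerSeries.coeff_zero_eq_constantCoeff_apply,
      ← PowerSeries.coeff_zero_eq_constantCoeff_apply, Polynomial.coeff_coe, ePoly_coeff_zero,
      PowerSeries.coeff_mk]
    simp [hz_zero]

lemma natDegree_ePoly (k : ℕ) : (ePoly k).natDegree ≤ k := by
  refine (Polynomial.natDegree_prod_le _ _).trans ?_
  refine (Finset.sum_le_sum fun i _ => natDegree_ePoly_factor i).trans ?_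
  simp

/-- The linear recurrence satisfied by the complete homogeneous polynomials in `k` variables. -/
lemma sum_ePoly_coeff_mul_hz (k : ℕ) (n : ℤ) :
    ∑ j ∈ Finset.range (k + 1), (ePoly k).coeff j * hz k (n - j) = if n = 0 then 1 else 0 := by
  rcases lt_or_ge n 0 with h | h
  · rw [if_neg (by omega)]
    exact Finset.sum_eq_zero fun j _ => by rw [hz_of_neg k (by omega), mul_zero]
  lift n to ℕ using h
  have h := congrArg (PowerSeries.coeff n) (ePoly_mul_mk_hz k)
  rw [PowerSeries.coeff_mul, Finset.Nat.sum_antidiagonal_eq_sum_range_succ_mk,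
    PowerSeries.coeff_one] at h
  simp only [Polynomial.coeff_coe, PowerSeries.coeff_mk] at h
  simp only [Nat.cast_eq_zero]
  rw [← h]
  have e1 : ∀ M, n < M → k < M → ∀ N, N ≤ M → (n < N ∨ k < N) →
      (∑ j ∈ Finset.range N, (ePoly k).coeff j * hz k ((n : ℤ) - j))
      = ∑ j ∈ Finset.range M, (ePoly k).coeff j * hz k ((n : ℤ) - j) := by
    intro M _ _ N hN hor
    refine Finset.sum_subset (by simpa using hN) fun j _ hj => ?_
    have hj : N ≤ j := by simpa using hj
    rcases hor with hor | hor
    · rw [hz_of_neg k (by omega), mul_zero]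
    · rw [Polynomial.coeff_eq_zero_of_natDegree_lt ((natDegree_ePoly k).trans_lt (by omega)),
        zero_mul]
  have e2 := e1 (n + k + 1) (by omega) (by omega) (k + 1) (by omega) (by omega)
  have e3 := e1 (n + k + 1) (by omega) (by omega) (n + 1) (by omega) (by omega)
  rw [e2, ← e3]
  refine Finset.sum_congr rfl fun j hj => ?_
  have := Finset.mem_range.mp hj
  rw [Nat.cast_sub (by omega)]

lemma substPsum_betaDet {k l : ℕ} (b : Fin l → ℤ) :
    substPsum k (betaDet b)
      = Matrix.det (Matrix.of fun i j : Fin l => hz k (b i - ((l : ℤ) - 1) + (j : ℕ))) := by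
  rw [betaDet, AlgHom.map_det]
  rfl

/-- In `k` variables, a determinant attached to shifted parts `b` vanishes unless
`0, ..., l - k - 1` all occur among the `b_i`. -/
lemma exists_eq_of_substPsum_betaDet_ne_zero {k l : ℕ} (b : Fin l → ℤ)
    (hb : substPsum k (betaDet b) ≠ 0) (v : ℕ) (hv : v + k < l) : ∃ i, b i = v := by
  rw [substPsum_betaDet] at hb
  by_contra! hne
  let c : Fin l → MvPolynomial (Fin k) ℂ :=
    fun j => if (j : ℕ) + v < l then (ePoly k).coeff (l - 1 - v - j) else 0
  have hc := Matrix.eq_zero_of_mulVec_eq_zero (v := c) hb (by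
    ext1 i
    have h := sum_ePoly_coeff_mul_hz k (b i - v)
    rw [if_neg (by have := hne i; omega)] at h
    simp only [Matrix.mulVec, dotProduct, Matrix.of_apply, Pi.zero_apply, c]
    refine Eq.trans ?_ h
    rw [Fin.sum_univ_eq_sum_range (fun j => hz k (b i - ((l : ℤ) - 1) + (j : ℕ))
      * if (j : ℕ) + v < l then (ePoly k).coeff (l - 1 - v - j) else 0) l]
    have hsub : Finset.range (k + 1) ⊆ Finset.range (l - v) := by
      intro x hx
      simp only [Finset.mem_range] at hx ⊢
      omega
    rw [Finset.sum_subset hsub, ← Finset.sum_range_reflect _ (l - v)]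
    · have hsub2 : Finset.range (l - v) ⊆ Finset.range l := by
        intro x hx
        simp only [Finset.mem_range] at hx ⊢
        omega
      rw [← Finset.sum_subset hsub2]
      · refine Finset.sum_congr rfl fun j hj => ?_
        have := Finset.mem_range.mp hj
        rw [if_pos (by omega), mul_comm, show l - v - 1 - j = l - 1 - v - j by omega]
        congr 2
        omega
      · intro j _ hj
        have : l - v ≤ j := by simpa using hj
        rw [if_neg (by omega), mul_zero]
    · intro j _ hj
      have : k + 1 ≤ j := by simpa using hj
      rw [Polynomial.coeff_eq_zero_of_natDegree_lt ((natDegree_ePoly k).trans_lt (by omega)),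
        zero_mul])
  have h1 := congrFun hc ⟨l - 1 - v, by omega⟩
  simp only [c, Pi.zero_apply] at h1
  rw [if_pos (by omega), Nat.sub_self, ePoly_coeff_zero] at h1
  exact one_ne_zero h1

/-- Multiplying all variables through: adding a full column of height `k` to a `k`-row shape. -/
lemma substPsum_schur_add_one {k : ℕ} (lam : Fin k → ℕ) :
    substPsum k (schur fun a => lam a + 1) = (∏ i, X i) * substPsum k (schur lam) := by
  rcases k with _ | n
  · simp [schur]
  let Cm : Matrix (Fin (n + 1)) (Fin (n + 1)) (MvPolynomial (Fin (n + 1)) ℂ) :=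
    Matrix.of fun c b => if (b : ℕ) < n then (if (c : ℕ) = b + 1 then 1 else 0)
      else -(ePoly (n + 1)).coeff (n + 1 - c)
  have hC : Cm.det = ∏ i, X i := by
    rw [Matrix.det_succ_row_zero, Finset.sum_eq_single (Fin.last n)]
    · have hsub : Cm.submatrix Fin.succ (Fin.last n).succAbove = 1 := by
        ext1 i j
        simp [Cm, Matrix.one_apply, Fin.ext_iff]
      rw [hsub, Matrix.det_one, mul_one]
      simp only [Cm, Matrix.of_apply, Fin.val_last, lt_irrefl, if_false, Fin.val_zero, Nat.sub_zero]
      rw [ePoly_coeff_top, pow_succ]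
      have : ((-1 : MvPolynomial (Fin (n + 1)) ℂ) ^ n) * (-1) ^ n = 1 := by
        rw [← mul_pow]; simp
      linear_combination (∏ i, X i) * this
    · intro j _ hj
      have : (j : ℕ) < n := by
        have := Fin.val_lt_last hj
        simpa using this
      simp [Cm, this]
    · simp
  rw [← hC, mul_comm, schur_eq_betaDet, schur_eq_betaDet, substPsum_betaDet, substPsum_betaDet,
    ← Matrix.det_mul]
  congr 1
  ext1 a b
  rw [Matrix.mul_apply]
  simp only [Matrix.of_apply, Cm]
  by_cases hb : (b : ℕ) < n
  · simp only [if_pos hb]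
    rw [Finset.sum_eq_single ⟨(b : ℕ) + 1, by omega⟩]
    · simp only [if_true, mul_one]
      congr 1
      push_cast
      ring
    · intro c _ hc
      rw [if_neg (fun h => hc (Fin.ext h)), mul_zero]
    · simp
  · simp only [if_neg hb]
    have hbn : (b : ℕ) = n := by omega
    have hr := sum_ePoly_coeff_mul_hz (n + 1) ((lam a : ℤ) + 1 - (a : ℕ) + n)
    rw [if_neg (by have := a.isLt; omega), Finset.sum_range_succ', ePoly_coeff_zero, one_mul,
      Nat.cast_zero, sub_zero] at hr
    rw [Fin.sum_univ_eq_sum_range (fun c => hz (n + 1)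
      ((lam a : ℤ) + (((n + 1 : ℕ) : ℤ) - 1) - (a : ℕ) - (((n + 1 : ℕ) : ℤ) - 1) + (c : ℕ))
      * -(ePoly (n + 1)).coeff (n + 1 - c)) (n + 1), ← Finset.sum_range_reflect]
    have : ∀ j ∈ Finset.range (n + 1), hz (n + 1)
      ((lam a : ℤ) + (((n + 1 : ℕ) : ℤ) - 1) - (a : ℕ) - (((n + 1 : ℕ) : ℤ) - 1)
        + ((n + 1 - 1 - j : ℕ) : ℕ))
      * -(ePoly (n + 1)).coeff (n + 1 - (n + 1 - 1 - j))
      = - ((ePoly (n + 1)).coeff (j + 1)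
        * hz (n + 1) ((lam a : ℤ) + 1 - (a : ℕ) + n - ((j + 1 : ℕ) : ℤ))) := by
      intro j hj
      have := Finset.mem_range.mp hj
      rw [show n + 1 - (n + 1 - 1 - j) = j + 1 by omega, mul_neg, mul_comm]
      congr 3
      omega
    rw [Finset.sum_congr rfl this, Finset.sum_neg_distrib]
    rw [← eq_neg_iff_add_eq_zero, ] at hr
    rw [hr, neg_neg, hbn]
    congr 1
    push_cast
    ring

lemma substPsum_schur_add {k : ℕ} (lam : Fin k → ℕ) (s : ℕ) :
    substPsum k (schur fun a => lam a + s) = (∏ i, X i) ^ s * substPsum k (schur lam) := by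
  induction s with
  | zero => simp
  | succ s ih =>
    have := substPsum_schur_add_one (fun a => lam a + s)
    rw [ih] at this
    rw [pow_succ']
    simpa [add_assoc, mul_assoc] using this

lemma schur_succ_of_last_eq_zero {n : ℕ} (lam : ℕ → ℕ) (h : lam n = 0) :
    schur (fun a : Fin (n + 1) => lam a) = schur (fun a : Fin n => lam a) := by
  rw [schur, Matrix.det_succ_row _ (Fin.last n), Finset.sum_eq_single (Fin.last n)]
  · have h0 : pz 0 = 1 := by
      have := pz_natCast 0
      rwa [Nat.cast_zero, pS_zero] at this
    simp only [Fin.val_last, Matrix.of_apply, h, Fin.succAbove_last, schur]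
    have : (-1 : MvPolynomial ℕ ℂ) ^ (n + n) = 1 := by rw [← two_mul, pow_mul]; simp
    rw [this, one_mul]
    simp only [Nat.cast_zero, zero_sub, neg_add_cancel, h0, one_mul]
    rfl
  · intro j _ hj
    have : (j : ℕ) < n := by simpa using Fin.val_lt_last hj
    simp only [Matrix.of_apply, Fin.val_last, h]
    rw [pz_of_neg (by omega)]
    simp
  · simp

lemma schur_add_eq {n : ℕ} (lam : ℕ → ℕ) (h : ∀ i, n ≤ i → lam i = 0) (d : ℕ) :
    schur (fun a : Fin (n + d) => lam a) = schur (fun a : Fin n => lam a) := by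
  induction d with
  | zero => rfl
  | succ d ih => rw [← ih]; exact schur_succ_of_last_eq_zero lam (h _ (Nat.le_add_right n d))

lemma killCompl_hz {n : ℕ} (p : MvPolynomial ℕ ℂ) :
    killCompl (Fin.castSucc_injective n) (substPsum (n + 1) p) = substPsum n p := by
  have : (killCompl (R := ℂ) (Fin.castSucc_injective n)).comp (substPsum (n + 1))
      = substPsum n := by
    ext1 i
    simp only [AlgHom.comp_apply, substPsum, aeval_X, psumC, map_smul, Fin.sum_univ_castSucc]
    rcases Nat.eq_zero_or_pos i with h | h
    · simp [h]
    · congr 1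
      have hl : killCompl (R := ℂ) (Fin.castSucc_injective n) (X (Fin.last n)) = 0 := by
        rw [killCompl, aeval_X, dif_neg]
        rintro ⟨y, hy⟩
        exact Fin.castSucc_ne_last y hy
      rw [map_add, map_sum, map_pow, hl, zero_pow (by omega), add_zero]
      refine Finset.sum_congr rfl fun j _ => ?_
      have := killCompl_rename_app (R := ℂ) (Fin.castSucc_injective n) (X j)
      rw [rename_X] at this
      rw [map_pow, this]
  rw [← this, AlgHom.comp_apply]

lemma substPsum_schur_factor {n : ℕ} (nu : ℕ → ℕ) (hnu : ∀ i ≤ n, nu n ≤ nu i) :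
    substPsum (n + 1) (schur fun a : Fin (n + 1) => nu a)
      = X (Fin.last n) ^ nu n * ((∏ i : Fin n, X i.castSucc) ^ nu n
        * substPsum (n + 1) (schur fun a : Fin n => nu a - nu n)) := by
  have h1 := substPsum_schur_add (fun a : Fin (n + 1) => nu a - nu n) (nu n)
  have h2 : (fun a : Fin (n + 1) => nu a - nu n + nu n) = fun a : Fin (n + 1) => nu a := by
    ext1 a
    exact Nat.sub_add_cancel (hnu a (by have := a.isLt; omega))
  rw [h2, Fin.prod_univ_castSucc, mul_pow,
    schur_succ_of_last_eq_zero (fun a => nu a - nu n) (Nat.sub_self _)] at h1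
  rw [h1]
  ring

lemma coeff_substPsum_schur_of_lt {n : ℕ} (nu : ℕ → ℕ) (hnu : ∀ i ≤ n, nu n ≤ nu i)
    (γ : Fin (n + 1) →₀ ℕ) (hγ : γ (Fin.last n) < nu n) :
    coeff γ (substPsum (n + 1) (schur fun a : Fin (n + 1) => nu a)) = 0 := by
  rw [substPsum_schur_factor nu hnu, X_pow_eq_monomial, coeff_monomial_mul', if_neg]
  intro h
  have := h (Fin.last n)
  rw [Finsupp.single_eq_same] at this
  omega

lemma coeff_substPsum_schur_last {n : ℕ} (nu : ℕ → ℕ) (hnu : ∀ i ≤ n, nu n ≤ nu i)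
    (δ : Fin n →₀ ℕ) :
    coeff (Finsupp.mapDomain Fin.castSucc δ + Finsupp.single (Fin.last n) (nu n))
      (substPsum (n + 1) (schur fun a : Fin (n + 1) => nu a))
      = coeff δ (substPsum n (schur fun a : Fin n => nu a)) := by
  rw [substPsum_schur_factor nu hnu, X_pow_eq_monomial, add_comm (Finsupp.mapDomain _ _),
    coeff_monomial_mul, one_mul,
    ← coeff_killCompl (Fin.castSucc_injective n), map_mul, killCompl_hz]
  have h2 : (fun a : Fin n => nu a - nu n + nu n) = fun a : Fin n => nu a := by
    ext1 a
    exact Nat.sub_add_cancel (hnu a (by have := a.isLt; omega))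
  have h1 := substPsum_schur_add (fun a : Fin n => nu a - nu n) (nu n)
  rw [h2] at h1
  rw [h1]
  congr 2
  rw [map_pow, map_prod]
  congr 1
  refine Finset.prod_congr rfl fun j _ => ?_
  have := killCompl_rename_app (R := ℂ) (Fin.castSucc_injective n) (X j)
  rwa [rename_X] at this

lemma evalPS_congr (k : ℕ) {F F' : (ℕ →₀ ℕ) → ℂ} (γ : Fin k →₀ ℕ)
    (h : ∀ β, Finsupp.weight (id : ℕ → ℕ) β = γ.degree → F β = F' β) :
    evalPS k F γ = evalPS k F' γ := by
  refine finsum_congr fun β => ?_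
  by_cases hβ : Finsupp.weight (id : ℕ → ℕ) β = γ.degree
  · rw [h β hβ]
  · have hps : ∀ n, (psumC k n).IsHomogeneous n := by
      intro n
      have : psumC k n = C ((n : ℂ)⁻¹) * ∑ i : Fin k, X i ^ n := by rw [psumC, C_mul']
      rw [this]
      exact IsHomogeneous.C_mul (IsHomogeneous.sum _ _ _ fun i _ => isHomogeneous_X_pow i n) _
    have hprod := IsHomogeneous.prod β.support (fun n => psumC k n ^ β n) (fun n => n * β n)
      fun n _ => (hps n).pow (β n)
    rw [hprod.coeff_eq_zero, mul_zero, mul_zero]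
    intro h
    apply hβ
    rw [h, Finsupp.weight_apply, Finsupp.sum]
    exact Finset.sum_congr rfl fun n _ => by rw [smul_eq_mul, mul_comm, id]

lemma derivsCoeff_congr (L : List ℕ) {F F' : (ℕ →₀ ℕ) → ℂ} (N : ℕ)
    (h : ∀ β, Finsupp.weight (id : ℕ → ℕ) β = N + L.sum → F β = F' β) (β : ℕ →₀ ℕ)
    (hβ : Finsupp.weight (id : ℕ → ℕ) β = N) :
    derivsCoeff L F β = derivsCoeff L F' β := by
  induction L generalizing N β with
  | nil => exact h β (by simpa using hβ)
  | cons i L ih =>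
    change ((β i : ℕ) + 1 : ℂ) * derivsCoeff L F (β + Finsupp.single i 1)
      = ((β i : ℕ) + 1 : ℂ) * derivsCoeff L F' (β + Finsupp.single i 1)
    rw [ih (N + i) (fun β' h' => h β' (by rw [h', List.sum_cons, add_assoc])) _ (by
      rw [map_add, hβ, Finsupp.weight_single, id, one_smul])]

lemma derivsCoeff_coeff (L : List ℕ) (Q : MvPolynomial ℕ ℂ) :
    derivsCoeff L (fun β => coeff β Q)
      = fun β => coeff β (L.foldr (fun i p => pderiv i p) Q) := by
  induction L with
  | nil => rfl
  | cons i L ih =>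
    ext1 β
    change ((β i : ℕ) + 1 : ℂ) * derivsCoeff L (fun β => coeff β Q) (β + Finsupp.single i 1) = _
    rw [ih, List.foldr_cons, coeff_pderiv]
    ring

lemma evalPS_coeff (k : ℕ) (Q : MvPolynomial ℕ ℂ) (γ : Fin k →₀ ℕ) :
    evalPS k (fun β => coeff β Q) γ = coeff γ (substPsum k Q) := by
  rw [substPsum, aeval_def, eval₂_eq, coeff_sum, evalPS,
    finsum_eq_sum_of_support_subset (s := Q.support)]
  · refine Finset.sum_congr rfl fun β _ => ?_
    rw [algebraMap_eq, coeff_C_mul]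
  · intro β hβ
    rw [Finset.mem_coe, mem_support_iff]
    exact left_ne_zero_of_mul hβ

lemma foldr_pderiv_add (L : List ℕ) (P Q : MvPolynomial ℕ ℂ) :
    L.foldr (fun i p => pderiv i p) (P + Q)
      = L.foldr (fun i p => pderiv i p) P + L.foldr (fun i p => pderiv i p) Q := by
  induction L with
  | nil => rfl
  | cons y l ih => simp [ih]

lemma foldr_pderiv_smul (L : List ℕ) (c : ℂ) (P : MvPolynomial ℕ ℂ) :
    L.foldr (fun i p => pderiv i p) (c • P) = c • L.foldr (fun i p => pderiv i p) P := by
  induction L with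
  | nil => rfl
  | cons y l ih => simp [ih]

lemma evalPS_derivsCoeff_series (k : ℕ) (L : List ℕ) (γ : Fin k →₀ ℕ)
    (P₀ : MvPolynomial ℕ ℂ) (p : Ptn → Prop) (ξ : Ptn → ℂ) (P : Ptn → MvPolynomial ℕ ℂ)
    (d : Ptn → ℕ) (hd : ∀ μ, p μ → IsWeightedHomogeneous (id : ℕ → ℕ) (P μ) (d μ))
    (hfin : ∀ N, {μ | p μ ∧ d μ = N}.Finite) :
    evalPS k (derivsCoeff L fun β =>
        coeff β P₀ + ∑ᶠ (μ : Ptn) (_ : p μ), ξ μ * coeff β (P μ)) γ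
      = coeff γ (substPsum k (L.foldr (fun i p => pderiv i p) P₀))
        + ∑ᶠ (μ : Ptn) (_ : p μ),
          ξ μ * coeff γ (substPsum k (L.foldr (fun i p => pderiv i p) (P μ))) := by
  have hS := hfin (γ.degree + L.sum)
  have hvan : ∀ μ, p μ → μ ∉ hS.toFinset →
      coeff γ (substPsum k (L.foldr (fun i p => pderiv i p) (P μ))) = 0 := by
    intro μ hμ hμS
    have hne : d μ ≠ γ.degree + L.sum := fun h => hμS (by simpa using ⟨hμ, h⟩)
    rw [← evalPS_coeff, ← derivsCoeff_coeff]
    have : evalPS k (derivsCoeff L fun β => coeff β (P μ)) γ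
        = evalPS k (derivsCoeff L fun β => coeff β 0) γ := by
      refine evalPS_congr k γ fun β hβ => derivsCoeff_congr L _ (fun β' hβ' => ?_) β hβ
      rw [coeff_zero]
      by_contra h
      exact hne ((hd μ hμ h).symm.trans hβ')
    rw [this, derivsCoeff_coeff, evalPS_coeff]
    have h0 := foldr_pderiv_smul L 0 0
    rw [zero_smul, zero_smul] at h0
    rw [h0, map_zero, coeff_zero]
  have h1 : ∀ f : Ptn → ℂ, (∀ μ, p μ → μ ∉ hS.toFinset → f μ = 0) →
      ∑ᶠ (μ : Ptn) (_ : p μ), ξ μ * f μ = ∑ μ ∈ hS.toFinset, ξ μ * f μ := by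
    intro f hf
    refine finsum_mem_eq_sum_of_subset (s := {μ | p μ}) _ ?_ ?_
    · rintro μ ⟨hμ, hμ'⟩
      by_contra h
      exact hμ' (by simp [hf μ hμ h])
    · intro μ hμ
      have : p μ ∧ d μ = γ.degree + L.sum := by simpa using hμ
      exact this.1
  rw [h1 _ hvan]
  have h2 : evalPS k (derivsCoeff L fun β =>
        coeff β P₀ + ∑ᶠ (μ : Ptn) (_ : p μ), ξ μ * coeff β (P μ)) γ
      = evalPS k (derivsCoeff L fun β =>
        coeff β (P₀ + ∑ μ ∈ hS.toFinset, ξ μ • P μ)) γ := by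
    refine evalPS_congr k γ fun β hβ => derivsCoeff_congr L _ (fun β' hβ' => ?_) β hβ
    rw [coeff_add, coeff_sum, h1]
    · simp
    · intro μ hμ hμS
      by_contra h
      exact hμS (by simpa using ⟨hμ, (hd μ hμ h).symm.trans hβ'⟩)
  rw [h2, derivsCoeff_coeff, evalPS_coeff, foldr_pderiv_add, foldr_pderiv_sum, map_add, map_sum,
    coeff_add, coeff_sum]
  simp [foldr_pderiv_smul]

lemma pS_isWeightedHomogeneous (n : ℕ) : IsWeightedHomogeneous (id : ℕ → ℕ) (pS n) n := by
  refine IsWeightedHomogeneous.sum _ _ _ fun m _ => ?_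
  rw [← C_mul']
  refine IsWeightedHomogeneous.C_mul ?_ _
  refine IsWeightedHomogeneous.sum _ _ _ fun c hc => ?_
  have := IsWeightedHomogeneous.prod Finset.univ (fun j => (X (c j : ℕ) : MvPolynomial ℕ ℂ))
    (fun j => (c j : ℕ)) (w := (id : ℕ → ℕ)) fun j _ => isWeightedHomogeneous_X _ _ _
  rwa [(Finset.mem_filter.mp hc).2.1] at this

lemma schur_isWeightedHomogeneous {l : ℕ} (lam : Fin l → ℕ) :
    IsWeightedHomogeneous (id : ℕ → ℕ) (schur lam) (∑ i, lam i) := by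
  rw [schur, Matrix.det_apply]
  refine IsWeightedHomogeneous.sum _ _ _ fun σ _ => ?_
  have key : IsWeightedHomogeneous (id : ℕ → ℕ)
      (∏ i, Matrix.of (fun a b : Fin l => pz ((lam a : ℤ) - ((a : ℕ) : ℤ) + ((b : ℕ) : ℤ))) (σ i) i)
      (∑ i, lam i) := by
    simp only [Matrix.of_apply]
    by_cases h : ∀ i, 0 ≤ (lam (σ i) : ℤ) - ((σ i : ℕ) : ℤ) + ((i : ℕ) : ℤ)
    · have := IsWeightedHomogeneous.prod Finset.univ
        (fun i => pz ((lam (σ i) : ℤ) - ((σ i : ℕ) : ℤ) + ((i : ℕ) : ℤ)))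
        (fun i => ((lam (σ i) : ℤ) - ((σ i : ℕ) : ℤ) + ((i : ℕ) : ℤ)).toNat)
        (w := (id : ℕ → ℕ)) fun i _ => by
          rw [pz, if_pos (h i)]
          exact pS_isWeightedHomogeneous _
      convert this using 1
      zify
      rw [Finset.sum_congr rfl fun i _ => Int.toNat_of_nonneg (h i), Finset.sum_add_distrib,
        Finset.sum_sub_distrib, Equiv.sum_comp σ fun i => (lam i : ℤ),
        Equiv.sum_comp σ fun i => ((i : ℕ) : ℤ)]
      ring
    · push Not at h
      obtain ⟨i, hi⟩ := h
      rw [Finset.prod_eq_zero (Finset.mem_univ i) (pz_of_neg hi)]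
      exact isWeightedHomogeneous_zero _ _ _
  rcases Int.units_eq_one_or (Equiv.Perm.sign σ) with h | h <;> rw [h]
  · simpa using key
  · simpa using key.neg

lemma Ptn.finite_of_bounded (M N : ℕ) :
    {μ : Ptn | (∀ i, μ.toFun i ≤ N) ∧ μ.toFun M = 0}.Finite := by
  let F : Ptn → (Fin M → Fin (N + 1)) := fun μ i => Fin.ofNat (N + 1) (μ.toFun i)
  refine Set.Finite.of_injOn (f := F) (t := Set.univ) (fun _ _ => Set.mem_univ _) ?_ Set.finite_univ
  rintro μ ⟨h1, h2⟩ ν ⟨h3, h4⟩ h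
  have : μ.toFun = ν.toFun := by
    ext1 i
    by_cases hi : i < M
    · have := congrArg Fin.val (congrFun h ⟨i, hi⟩)
      simp only [F, Fin.val_ofNat] at this
      rwa [Nat.mod_eq_of_lt (by have := h1 i; omega), Nat.mod_eq_of_lt (by have := h3 i; omega)]
        at this
    · have := μ.anti M i (by omega)
      have := ν.anti M i (by omega)
      omega
  cases μ
  cases ν
  congr

lemma Ptn.toFun_len (μ : Ptn) : μ.toFun μ.len = 0 := Nat.find_spec μ.bdd

lemma Ptn.one_le_of_lt_len (μ : Ptn) {i : ℕ} (h : i < μ.len) : 1 ≤ μ.toFun i :=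
  Nat.one_le_iff_ne_zero.mpr (Nat.find_min μ.bdd h)

lemma Ptn.len_le_sum (μ : Ptn) : μ.len ≤ ∑ a : Fin μ.len, μ.toFun a := by
  have : ∑ a : Fin μ.len, 1 ≤ ∑ a : Fin μ.len, μ.toFun a :=
    Finset.sum_le_sum fun a _ => μ.one_le_of_lt_len a.isLt
  simpa using this

lemma Ptn.finite_size_eq (p : Ptn → Prop) (N : ℕ) :
    {μ : Ptn | p μ ∧ ∑ a : Fin μ.len, μ.toFun a = N}.Finite := by
  refine (Ptn.finite_of_bounded N N).subset ?_
  rintro μ ⟨-, h⟩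
  refine ⟨fun i => ?_, ?_⟩
  · by_cases hi : i < μ.len
    · rw [← h]
      exact Finset.single_le_sum (f := fun a : Fin μ.len => μ.toFun a) (fun _ _ => Nat.zero_le _)
        (Finset.mem_univ ⟨i, hi⟩)
    · have := μ.anti μ.len i (by omega)
      have := μ.toFun_len
      omega
  · have := μ.len_le_sum
    have := μ.anti μ.len N (by omega)
    have := μ.toFun_len
    omega

lemma Ptn.schurP_eq (μ : Ptn) {n : ℕ} (h : μ.len ≤ n) :
    μ.schurP = schur fun a : Fin n => μ.toFun a := by
  obtain ⟨d, rfl⟩ := Nat.exists_eq_add_of_le h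
  refine (schur_add_eq μ.toFun (fun i hi => ?_) d).symm
  have := μ.anti μ.len i hi
  have := μ.toFun_len
  omega

/-- Partitions with prescribed tail from index `k` on have finitely many members of each size. -/
lemma Ptn.finite_head_size_eq (p : Ptn → Prop) (k M : ℕ) (tail : ℕ → ℕ) (htail : tail M = 0)
    (hM : k ≤ M) (hp : ∀ μ, p μ → ∀ i, k ≤ i → μ.toFun i = tail i) (N : ℕ) :
    {μ : Ptn | p μ ∧ ∑ a : Fin k, μ.toFun a = N}.Finite := by
  refine (Ptn.finite_of_bounded M (N + tail k)).subset ?_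
  rintro μ ⟨hμ, h⟩
  refine ⟨fun i => ?_, by rw [hp μ hμ M hM, htail]⟩
  by_cases hi : i < k
  · have := Finset.single_le_sum (f := fun a : Fin k => μ.toFun a) (fun _ _ => Nat.zero_le _)
        (Finset.mem_univ ⟨i, hi⟩)
    simp only at this
    omega
  · have := μ.anti k i (by omega)
    rw [hp μ hμ k le_rfl] at this
    omega

lemma sum_natAdd_add_card_le {k n : ℕ} {b : Fin (k + n) → ℤ} (hb : StrictAnti b)
    (I : Finset (Fin (k + n))) (hI : I.card = n) :
    ∑ i : Fin n, b (Fin.natAdd k i) + ((I.filter fun i : Fin (k + n) => (i : ℕ) < k).card : ℤ)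
      ≤ ∑ i ∈ I, b i := by
  rcases n.eq_zero_or_pos with rfl | hn
  · rw [Finset.card_eq_zero] at hI
    simp [hI]
  set K : Finset (Fin (k + n)) := Finset.univ.map (Fin.natAddEmb k) with hK
  have hKmem : ∀ i, i ∈ K ↔ k ≤ (i : ℕ) := by
    intro i
    rw [hK, Finset.mem_map]
    constructor
    · rintro ⟨j, -, rfl⟩
      simp
    · intro h
      exact ⟨⟨i - k, by omega⟩, Finset.mem_univ _, Fin.ext (by simp; omega)⟩
  have hKs : ∑ i : Fin n, b (Fin.natAdd k i) = ∑ i ∈ K, b i := by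
    rw [hK, Finset.sum_map]
    rfl
  have hKc : K.card = n := by simp [hK]
  have hsd : (I \ K).card = (K \ I).card := Finset.card_sdiff_comm (by rw [hI, hKc])
  have hfil : (I.filter fun i : Fin (k + n) => (i : ℕ) < k) = I \ K := by
    ext i
    simp [hKmem]
  have hdiff := Finset.sum_sdiff_sub_sum_sdiff (s₁ := K) (s₂ := I) (f := b)
  rw [hKs, hfil]
  let p : Fin (k + n) := ⟨k, by omega⟩
  have h1 : ∑ i ∈ K \ I, b i ≤ (K \ I).card • b p :=
    Finset.sum_le_card_nsmul _ _ _ fun i hi => hb.antitone (by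
      rw [Finset.mem_sdiff, hKmem] at hi
      exact hi.1)
  have h2 : (I \ K).card • (b p + 1) ≤ ∑ i ∈ I \ K, b i :=
    Finset.card_nsmul_le_sum _ _ _ fun i hi => hb (by
      rw [Finset.mem_sdiff, hKmem] at hi
      exact not_le.mp hi.2)
  rw [hsd, nsmul_eq_mul] at h2
  rw [nsmul_eq_mul] at h1
  rw [hsd]
  linarith

/-- If lowering the entries of a strictly decreasing sequence by the steps `a j` makes all of
`0, …, n - 1` occur, and the sequence dominates `β` on its last `n` entries, where lowering the
`j`-th of them by `a j` gives a permutation of `0, …, n - 1`, then this is the only way. -/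
lemma lowering_unique {k n m : ℕ} (hm : m ≤ n) {b : Fin (k + n) → ℤ} (hb : StrictAnti b)
    {β : Fin n → ℤ} (hbβ : ∀ i, β i ≤ b (Fin.natAdd k i)) (a : ℕ → ℕ)
    (π : Equiv.Perm (Fin n))
    (hπ : ∀ i : Fin n, β i - (if (i : ℕ) < m then (a i : ℤ) else 0) = (n : ℤ) - 1 - (π i : ℕ))
    (hβm : ∀ i : Fin n, (i : ℕ) < m → (n : ℤ) ≤ β i)
    (hπm : ∀ i i' : Fin n, i < i' → (i' : ℕ) < m → π i' < π i)
    (f : Fin m → Fin (k + n))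
    (hf : ∀ v < n, ∃ i, b i - ∑ j : Fin m, (if i = f j then (a j : ℤ) else 0) = v) :
    (∀ i, b (Fin.natAdd k i) = β i) ∧ ∀ j, f j = Fin.natAdd k (Fin.castLE hm j) := by
  classical
  set b' : Fin (k + n) → ℤ := fun i => b i - ∑ j : Fin m, (if i = f j then (a j : ℤ) else 0)
    with hb'
  choose ι hι using fun v : Fin n => show ∃ i, b' i = (v : ℕ) from hf v v.isLt
  have hιinj : Function.Injective ι := by
    intro v w h
    have h1 := hι v
    rw [h, hι w] at h1
    exact Fin.ext (by exact_mod_cast h1.symm)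
  set I : Finset (Fin (k + n)) := Finset.univ.map ⟨_, hιinj⟩ with hI
  have hIc : I.card = n := by simp [hI]
  have hIb' : ∑ i ∈ I, b' i = ∑ v : Fin n, ((v : ℕ) : ℤ) := by
    rw [hI, Finset.sum_map]
    exact Finset.sum_congr rfl fun v _ => hι v
  have hIinj : ∀ i ∈ I, ∀ i' ∈ I, b' i = b' i' → i = i' := by
    intro i hi i' hi' h
    obtain ⟨v, -, rfl⟩ := Finset.mem_map.mp hi
    obtain ⟨v', -, rfl⟩ := Finset.mem_map.mp hi'
    simp only [Function.Embedding.coeFn_mk] at h ⊢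
    rw [hι v, hι v'] at h
    exact congrArg ι (Fin.ext (by exact_mod_cast h))
  have hIrange : ∀ i ∈ I, 0 ≤ b' i ∧ b' i < n := by
    intro i hi
    obtain ⟨v, -, rfl⟩ := Finset.mem_map.mp hi
    simp only [Function.Embedding.coeFn_mk]
    rw [hι v]
    have := v.isLt
    omega
  have hsumI : ∑ i ∈ I, b i
      = ∑ v : Fin n, ((v : ℕ) : ℤ) + ∑ j : Fin m, if f j ∈ I then (a j : ℤ) else 0 := by
    rw [← hIb', hb', Finset.sum_sub_distrib, Finset.sum_comm]
    simp
  have hc : ∑ i : Fin n, β i = ∑ v : Fin n, ((v : ℕ) : ℤ) + ∑ j : Fin m, (a j : ℤ) := by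
    have h1 := Finset.sum_congr (rfl : (Finset.univ : Finset (Fin n)) = _) fun i _ => hπ i
    rw [Finset.sum_sub_distrib, Equiv.sum_comp π fun i => (n : ℤ) - 1 - ((i : ℕ) : ℤ)] at h1
    have h2 : ∑ i : Fin n, (if (i : ℕ) < m then (a i : ℤ) else 0) = ∑ j : Fin m, (a j : ℤ) := by
      rw [Fin.sum_univ_eq_sum_range (fun i => if i < m then (a i : ℤ) else 0),
        Fin.sum_univ_eq_sum_range (fun i => (a i : ℤ)), ← Finset.sum_filter]
      congr 1
      ext i
      simp only [Finset.mem_filter, Finset.mem_range]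
      omega
    have h3 : ∑ i : Fin n, ((n : ℤ) - 1 - (i : ℕ)) = ∑ v : Fin n, ((v : ℕ) : ℤ) := by
      rw [← Equiv.sum_comp Fin.revPerm]
      refine Finset.sum_congr rfl fun i _ => ?_
      rw [Fin.revPerm_apply, Fin.val_rev]
      omega
    linarith
  have hle1 := sum_natAdd_add_card_le hb I hIc
  have hle2 : ∑ i, β i ≤ ∑ i : Fin n, b (Fin.natAdd k i) := Finset.sum_le_sum fun i _ => hbβ i
  have hle3 : ∑ j : Fin m, (if f j ∈ I then (a j : ℤ) else 0) ≤ ∑ j : Fin m, (a j : ℤ) :=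
    Finset.sum_le_sum fun j _ => by split_ifs <;> simp
  have hcard : (0 : ℤ) ≤ ((I.filter fun i : Fin (k + n) => (i : ℕ) < k).card : ℤ) := by positivity
  have heq : ∀ i, b (Fin.natAdd k i) = β i := by
    have h := (Finset.sum_eq_sum_iff_of_le fun i _ => hbβ i).mp (le_antisymm hle2 (by linarith))
    exact fun i => (h i (Finset.mem_univ i)).symm
  have hIK : ∀ i : Fin n, Fin.natAdd k i ∈ I := by
    have h1 : (I.filter fun i : Fin (k + n) => (i : ℕ) < k).card = 0 := by
      have : ((I.filter fun i : Fin (k + n) => (i : ℕ) < k).card : ℤ) = 0 := by linarith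
      exact_mod_cast this
    rw [Finset.card_eq_zero, Finset.filter_eq_empty_iff] at h1
    have h2 : I = Finset.univ.map (Fin.natAddEmb k) := by
      refine Finset.eq_of_subset_of_card_le (fun i hi => ?_) (by simp [hIc])
      have := h1 hi
      exact Finset.mem_map.mpr ⟨⟨i - k, by omega⟩, Finset.mem_univ _, Fin.ext (by simp; omega)⟩
    intro i
    rw [h2, Finset.mem_map]
    exact ⟨i, Finset.mem_univ _, rfl⟩
  refine ⟨heq, ?_⟩
  -- every row that is too large has to be lowered
  have hhit : ∀ i : Fin m, ∃ j, f j = Fin.natAdd k (Fin.castLE hm i) := by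
    intro i
    by_contra! h
    have h1 := hIrange _ (hIK (Fin.castLE hm i))
    have h2 : b' (Fin.natAdd k (Fin.castLE hm i)) = β (Fin.castLE hm i) := by
      rw [hb', ← heq]
      simp only [sub_eq_self]
      exact Finset.sum_eq_zero fun j _ => if_neg (h j).symm
    have := hβm (Fin.castLE hm i) i.isLt
    omega
  choose e he using hhit
  have heinj : Function.Injective e := by
    intro i i' h
    have h1 := he i
    rw [h, he i'] at h1
    simpa [Fin.ext_iff] using h1.symm
  have hesurj := Finite.injective_iff_surjective.mp heinj
  have hfe : ∀ j, ∃ i, e i = j ∧ f j = Fin.natAdd k (Fin.castLE hm i) := by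
    intro j
    obtain ⟨i, rfl⟩ := hesurj j
    exact ⟨i, rfl, he i⟩
  have hb'e : ∀ i, b' (Fin.natAdd k (Fin.castLE hm i)) = β (Fin.castLE hm i) - a (e i) := by
    intro i
    simp only [hb', ← heq]
    congr 1
    rw [Finset.sum_eq_single (e i), if_pos (he i).symm]
    · intro j _ hj
      refine if_neg fun h => hj ?_
      obtain ⟨i', rfl, h'⟩ := hfe j
      rw [h'] at h
      congr 1
      simpa [Fin.ext_iff] using h.symm
    · exact fun h => absurd (Finset.mem_univ _) h
  have hb'un : ∀ i : Fin n, m ≤ (i : ℕ) → b' (Fin.natAdd k i) = β i := by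
    intro i hi
    rw [hb', ← heq]
    simp only [sub_eq_self]
    refine Finset.sum_eq_zero fun j _ => if_neg fun h => ?_
    obtain ⟨i', rfl, h'⟩ := hfe j
    rw [h'] at h
    have : (i : ℕ) = i' := by simpa [Fin.ext_iff] using h
    have := i'.isLt
    omega
  suffices hmain : ∀ J : ℕ, ∀ hJ : J < m, e ⟨J, hJ⟩ = ⟨J, hJ⟩ by
    intro j
    have h := he j
    rwa [hmain j j.isLt] at h
  intro J
  induction J using Nat.strong_induction_on with
  | _ J ih =>
  intro hJ
  obtain ⟨i, hi⟩ := hesurj ⟨J, hJ⟩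
  rcases lt_trichotomy (i : ℕ) J with h | h | h
  · have := ih i h i.isLt
    rw [Fin.eta, hi] at this
    exact absurd (congrArg Fin.val this) (by simp; omega)
  · subst h
    exact hi
  · exfalso
    set y := Fin.castLE hm i with hy
    have hval : b' (Fin.natAdd k y) = β y - a J := by rw [hb'e, hi]
    have hrange := hIrange _ (hIK y)
    -- the value taken in row `y` is the target value of some other row `q`
    obtain ⟨q, hq⟩ := π.surjective ⟨(n - 1 - (b' (Fin.natAdd k y))).toNat, by omega⟩
    have hq' : (n : ℤ) - 1 - (π q : ℕ) = b' (Fin.natAdd k y) := by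
      rw [hq]
      simp only
      omega
    have hlt : b' (Fin.natAdd k y) < (n : ℤ) - 1 - (π (Fin.castLE hm ⟨J, hJ⟩) : ℕ) := by
      have h1 : β y < β (Fin.castLE hm ⟨J, hJ⟩) := by
        rw [← heq, ← heq]
        exact hb (by simpa [Fin.lt_def, hy] using h)
      have h2 := hπ (Fin.castLE hm ⟨J, hJ⟩)
      simp only [Fin.val_castLE, if_pos hJ] at h2
      omega
    by_cases hqm : (q : ℕ) < m
    · have hqJ : (q : ℕ) < J := by
        by_contra! hJq
        rcases hJq.eq_or_lt with h1 | h1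
        · have : q = Fin.castLE hm ⟨J, hJ⟩ := Fin.ext h1.symm
          rw [this] at hq'
          omega
        · have := hπm (Fin.castLE hm ⟨J, hJ⟩) q h1 hqm
          rw [Fin.lt_def] at this
          omega
      have h1 := hb'e ⟨q, hqm⟩
      rw [ih q hqJ hqm] at h1
      have h2 : b' (Fin.natAdd k q) = b' (Fin.natAdd k y) := by
        have h3 := hπ q
        rw [if_pos hqm] at h3
        exact h1.trans (h3.trans hq')
      have h3 : (q : ℕ) = i := by
        simpa [Fin.ext_iff, hy] using hIinj _ (hIK q) _ (hIK y) h2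
      omega
    · have h2 : b' (Fin.natAdd k q) = b' (Fin.natAdd k y) := by
        have h3 := hπ q
        rw [if_neg hqm, sub_zero] at h3
        exact (hb'un q (not_lt.mp hqm)).trans (h3.trans hq')
      have h3 : (q : ℕ) = i := by
        simpa [Fin.ext_iff, hy] using hIinj _ (hIK q) _ (hIK y) h2
      have := i.isLt
      omega

lemma betaDet_comp_perm {l : ℕ} (b : Fin l → ℤ) (σ : Equiv.Perm (Fin l)) :
    betaDet (fun r => b (σ r)) = ((Equiv.Perm.sign σ : ℤ) : MvPolynomial ℕ ℂ) * betaDet b := by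
  rw [betaDet, betaDet, ← Matrix.det_permute]
  rfl

lemma substPsum_foldr_pderiv_schur {k n m : ℕ} (hm : m ≤ n) (nu lam : ℕ → ℕ) (hnu : Antitone nu)
    (hle : ∀ i, lam i ≤ nu i) (a : ℕ → ℕ) (ha : ∀ j < m, 1 ≤ a j)
    (π : Equiv.Perm (Fin n))
    (hπ : ∀ i : Fin n, (lam (k + i) : ℤ) - (i : ℕ) - (if (i : ℕ) < m then (a i : ℤ) else 0)
      = - (π i : ℕ))
    (hlam : ∀ i < m, i < lam (k + i))
    (hπm : ∀ i i' : Fin n, i < i' → (i' : ℕ) < m → π i' < π i)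
    [Decidable (∀ i < n, nu (k + i) = lam (k + i))] :
    substPsum k (((List.range m).map a).foldr (fun i p => pderiv i p)
        (schur fun i : Fin (k + n) => nu i))
      = if ∀ i < n, nu (k + i) = lam (k + i) then
          ((Equiv.Perm.sign π : ℤ) : MvPolynomial (Fin k) ℂ)
            * substPsum k (schur fun i : Fin k => nu i) else 0 := by
  set b : Fin (k + n) → ℤ := fun i => (nu i : ℤ) + (((k + n : ℕ) : ℤ) - 1) - (i : ℕ) with hb
  have hanti : StrictAnti b := by
    intro i j hij
    have := hnu hij.le
    rw [Fin.lt_def] at hij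
    simp only [hb]
    omega
  set β : Fin n → ℤ := fun i => (lam (k + i) : ℤ) + (n : ℤ) - 1 - (i : ℕ) with hβ
  have hbβ : ∀ i : Fin n, b (Fin.natAdd k i) = β i ↔ nu (k + i) = lam (k + i) := by
    intro i
    simp only [hb, hβ, Fin.val_natAdd]
    omega
  have key := lowering_unique hm hanti (β := β) (fun i => by
      have := hle (k + i)
      simp only [hb, hβ, Fin.val_natAdd]
      omega) a π (fun i => by
      have := hπ i
      simp only [hβ]
      linarith) (fun i hi => by
      have := hlam i hi
      simp only [hβ]
      omega) hπm
  have hcond : (∀ i < n, nu (k + i) = lam (k + i)) ↔ ∀ i, b (Fin.natAdd k i) = β i :=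
    ⟨fun h i => (hbβ i).mpr (h i i.isLt), fun h i hi => (hbβ ⟨i, hi⟩).mp (h ⟨i, hi⟩)⟩
  rw [schur_eq_betaDet, foldr_pderiv_betaDet a m ha, map_sum]
  have hvan : ∀ f : Fin m → Fin (k + n), substPsum k (betaDet fun r =>
      b r - ∑ j : Fin m, if r = f j then (a j : ℤ) else 0) ≠ 0 →
      (∀ i, b (Fin.natAdd k i) = β i) ∧ ∀ j, f j = Fin.natAdd k (Fin.castLE hm j) := by
    intro f hf
    exact key f fun v hv => exists_eq_of_substPsum_betaDet_ne_zero _ hf v (by omega)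
  split_ifs with hif
  · rw [hcond] at hif
    rw [Finset.sum_eq_single fun j => Fin.natAdd k (Fin.castLE hm j)]
    · set nu' : ℕ → ℕ := fun i => if i < k then nu i else 0 with hnu'
      have h1 : (schur fun i : Fin k => nu i) = schur fun i : Fin (k + n) => nu' i := by
        rw [schur_add_eq nu' (fun i hi => if_neg (not_lt.mpr hi))]
        congr 1
        ext1 i
        exact (if_pos i.isLt).symm
      rw [h1, schur_eq_betaDet]
      set σ : Equiv.Perm (Fin (k + n)) :=
        finSumFinEquiv.permCongr (Equiv.Perm.sumCongr 1 π) with hσ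
      have hsign : Equiv.Perm.sign σ = Equiv.Perm.sign π := by
        rw [hσ, Equiv.Perm.sign_permCongr, Equiv.Perm.sign_sumCongr, map_one, one_mul]
      rw [← hsign, ← map_intCast (substPsum k), ← map_mul, ← betaDet_comp_perm]
      congr 2
      ext1 r
      refine Fin.addCases (fun i => ?_) (fun i => ?_) r
      · have : σ (Fin.castAdd n i) = Fin.castAdd n i := by
          simp [hσ, Equiv.permCongr_apply]
        rw [this]
        simp only [hnu', Fin.val_castAdd, i.isLt, if_true, sub_eq_self]
        rw [Finset.sum_eq_zero]
        intro j _
        refine if_neg fun h => ?_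
        have := congrArg Fin.val h
        simp at this
        omega
      · have : σ (Fin.natAdd k i) = Fin.natAdd k (π i) := by
          simp [hσ, Equiv.permCongr_apply]
        have hbi : (nu (Fin.natAdd k i) : ℤ) + (((k + n : ℕ) : ℤ) - 1) - (Fin.natAdd k i : ℕ)
            = β i :=
          hif i
        rw [this, hbi]
        have hs : (∑ j : Fin m, if Fin.natAdd k i = Fin.natAdd k (Fin.castLE hm j)
            then (a j : ℤ) else 0) = if (i : ℕ) < m then (a i : ℤ) else 0 := by
          split_ifs with him
          · rw [Finset.sum_eq_single ⟨i, him⟩]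
            · exact if_pos rfl
            · intro j _ hj
              refine if_neg fun h => hj (Fin.ext ?_)
              simpa [Fin.ext_iff] using h.symm
            · exact fun h => absurd (Finset.mem_univ _) h
          · refine Finset.sum_eq_zero fun j _ => if_neg fun h => him ?_
            have : (i : ℕ) = j := by simpa [Fin.ext_iff] using h
            omega
        rw [hs]
        have := hπ i
        simp only [hβ, hnu', Fin.val_natAdd, add_lt_iff_neg_left, not_lt_zero, if_false]
        push_cast
        linarith
    · intro f _ hf
      by_contra h
      exact hf (funext (hvan f h).2)
    · exact fun h => absurd (Finset.mem_univ _) h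
  · refine Finset.sum_eq_zero fun f _ => ?_
    by_contra h
    exact hif (hcond.mpr (hvan f h).1)

section GapSequence

variable {g : ℕ} {G : Finset ℕ}

lemma wseq_eq_nth (G : Finset ℕ) (i : ℕ) : wseq G i = Nat.nth (· ∈ G) i := by
  have hf : (Set.ofPred (· ∈ G)).Finite := G.finite_toSet
  rw [Nat.nth_eq_getD_sort hf, wseq]
  congr
  ext x
  simp

lemma lt_card_toFinset_of_lt (hcard : G.card = g) {i : ℕ} (hi : i < g)
    (hf : (Set.ofPred (· ∈ G)).Finite) : i < hf.toFinset.card := by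
  convert hcard ▸ hi
  ext x
  simp

lemma wseq_lt_wseq (hcard : G.card = g) {i j : ℕ} (hij : i < j) (hj : j < g) :
    wseq G i < wseq G j := by
  have hf : (Set.ofPred (· ∈ G)).Finite := G.finite_toSet
  rw [wseq_eq_nth, wseq_eq_nth]
  refine Nat.nth_lt_nth_of_lt_card hf hij (lt_card_toFinset_of_lt hcard hj hf)

lemma le_wseq (hcard : G.card = g) {i : ℕ} (hi : i < g) : i ≤ wseq G i := by
  induction i with
  | zero => exact Nat.zero_le _
  | succ i ih => exact (ih (by omega)).trans_lt (wseq_lt_wseq hcard i.lt_succ_self hi)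

lemma gapPart_antitone (hcard : G.card = g) {i j : ℕ} (hij : i ≤ j) (hj : j < g) :
    gapPart G g j ≤ gapPart G g i := by
  rw [gapPart, gapPart]
  obtain ⟨d, rfl⟩ := Nat.exists_eq_add_of_le hij
  have : ∀ e a, a + e < g → wseq G a + e ≤ wseq G (a + e) := by
    intro e a h
    induction e with
    | zero => rfl
    | succ e ih =>
      have h1 := wseq_lt_wseq hcard (show a + e < a + (e + 1) by omega) h
      have h2 := ih (by omega)
      omega
  have := this d (g - 1 - (i + d)) (by omega)
  rw [show g - 1 - (i + d) + d = g - 1 - i by omega] at this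
  have := le_wseq hcard (show g - 1 - (i + d) < g by omega)
  omega

lemma wstar_lt_wstar {i j : ℕ} (hij : i < j) : wstar G i < wstar G j := by
  refine Nat.nth_strictMono ?_ hij
  exact G.finite_toSet.infinite_compl

lemma count_mem_add_gapm {k : ℕ} : Nat.count (· ∈ G) (g - k) + gapm G g k = g - k := by
  rw [Nat.count_eq_card_filter_range, gapm, Finset.card_filter_add_card_filter_not,
    Finset.card_range]

lemma gapm_le {k : ℕ} : gapm G g k ≤ g - k := by
  have := count_mem_add_gapm (G := G) (g := g) (k := k)
  omega

lemma wstar_lt {k j : ℕ} (hj : j < gapm G g k) : wstar G j < g - k := by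
  refine Nat.nth_lt_of_lt_count ?_
  rwa [Nat.count_eq_card_filter_range]

lemma wseq_lt {k i : ℕ} (hi : i < g - k - gapm G g k) : wseq G i < g - k := by
  rw [wseq_eq_nth]
  refine Nat.nth_lt_of_lt_count ?_
  have := count_mem_add_gapm (G := G) (g := g) (k := k)
  omega

lemma le_wseq_of_le (hcard : G.card = g) {k i : ℕ} (hi : g - k - gapm G g k ≤ i) (hig : i < g) :
    g - k ≤ wseq G i := by
  rw [wseq_eq_nth]
  have hf : (Set.ofPred (· ∈ G)).Finite := G.finite_toSet
  by_contra! h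
  have hi' := lt_card_toFinset_of_lt hcard hig hf
  have h1 := Nat.count_strict_mono (Nat.nth_mem_of_lt_card hf hi') h
  rw [Nat.count_nth_of_lt_card_finite hf hi'] at h1
  have := count_mem_add_gapm (G := G) (g := g) (k := k)
  omega

lemma pad_gapPart_of_lt {i : ℕ} (hi : i < g) :
    pad (fun a : Fin g => gapPart G g a) i = gapPart G g i := by
  rw [pad, dif_pos hi]

lemma pad_of_le {l : ℕ} (lam : Fin l → ℕ) {i : ℕ} (hi : l ≤ i) : pad lam i = 0 :=
  dif_neg (not_lt.mpr hi)

lemma pad_gapPart_antitone (hcard : G.card = g) :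
    Antitone (pad fun a : Fin g => gapPart G g a) := by
  intro i j hij
  rcases lt_or_ge j g with hj | hj
  · rw [pad_gapPart_of_lt hj, pad_gapPart_of_lt (hij.trans_lt hj)]
    exact gapPart_antitone hcard hij hj
  · rw [pad_of_le _ hj]
    exact Nat.zero_le _

lemma substPsum_foldr_gapa (hcard : G.card = g) {k : ℕ} (hk : k ≤ g)
    (π : Equiv.Perm (Fin (g - k)))
    (hπ : ∀ j : Fin (g - k), ((π j : ℕ))
        = g - k - 1 - (if (j : ℕ) < gapm G g k then wstar G j
            else wseq G (g - k - (j : ℕ) - 1)))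
    (nu : ℕ → ℕ) (hnu : Antitone nu)
    (hle : ∀ i, pad (fun a : Fin g => gapPart G g a) i ≤ nu i) (r : ℕ)
    (hr : ∀ i, g + r ≤ i → nu i = 0)
    [Decidable (∀ i, k ≤ i → nu i = pad (fun a : Fin g => gapPart G g a) i)] :
    substPsum k (((List.range (gapm G g k)).map (gapa G g k)).foldr (fun i p => pderiv i p)
        (schur fun i : Fin (k + (g - k + r)) => nu i))
      = if ∀ i, k ≤ i → nu i = pad (fun a : Fin g => gapPart G g a) i then
          ((Equiv.Perm.sign π : ℤ) : MvPolynomial (Fin k) ℂ)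
            * substPsum k (schur fun i : Fin k => nu i) else 0 := by
  set lam := pad fun a : Fin g => gapPart G g a with hlam
  have hm : gapm G g k ≤ g - k := gapm_le
  have hval : ∀ i, i < g - k → g - k - i - 1 ≤ wseq G (g - k - i - 1) ∧
      lam (k + i) = wseq G (g - k - i - 1) - (g - k - i - 1) := by
    intro i hi
    refine ⟨le_wseq hcard (by omega), ?_⟩
    rw [hlam, pad_gapPart_of_lt (by omega), gapPart, show g - 1 - (k + i) = g - k - i - 1 by omega]
  have hbig : ∀ i, i < gapm G g k → wstar G i < g - k ∧ g - k ≤ wseq G (g - k - i - 1) :=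
    fun i hi => ⟨wstar_lt hi, le_wseq_of_le hcard (by omega) (by omega)⟩
  set σ : Equiv.Perm (Fin (g - k + r)) := finSumFinEquiv.permCongr (Equiv.Perm.sumCongr π 1)
    with hσ
  have hσ1 : ∀ i : Fin (g - k), σ (Fin.castAdd r i) = Fin.castAdd r (π i) := by
    intro i
    simp [hσ, Equiv.permCongr_apply]
  have hσ2 : ∀ i : Fin r, σ (Fin.natAdd (g - k) i) = Fin.natAdd (g - k) i := by
    intro i
    simp [hσ, Equiv.permCongr_apply]
  have hsign : Equiv.Perm.sign σ = Equiv.Perm.sign π := by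
    rw [hσ, Equiv.Perm.sign_permCongr, Equiv.Perm.sign_sumCongr, map_one, mul_one]
  rw [substPsum_foldr_pderiv_schur (hm.trans (Nat.le_add_right _ r)) nu lam hnu hle (gapa G g k)
    ?_ σ ?_ ?_ ?_, hsign]
  · have hiff : (∀ i < g - k + r, nu (k + i) = lam (k + i)) ↔ ∀ i, k ≤ i → nu i = lam i := by
      refine ⟨fun h i hi => ?_, fun h i _ => h _ (Nat.le_add_right k i)⟩
      rcases lt_or_ge i (g + r) with hir | hir
      · have := h (i - k) (by omega)
        rwa [show k + (i - k) = i by omega] at this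
      · rw [hr i hir, hlam, pad_of_le _ (by omega)]
    by_cases h : ∀ i, k ≤ i → nu i = lam i
    · rw [if_pos h, if_pos (hiff.mpr h)]
    · rw [if_neg h, if_neg (mt hiff.mp h)]
  · intro j hj
    have := hbig j hj
    rw [gapa]
    omega
  · intro i
    refine Fin.addCases (fun i => ?_) (fun i => ?_) i
    · have h1 := hval i i.isLt
      have h2 := hπ i
      have h3 := i.isLt
      rw [hσ1]
      simp only [Fin.val_castAdd]
      split_ifs at h2 ⊢ with him
      · have h4 := hbig i him
        rw [gapa]
        omega
      · have h4 := wseq_lt (G := G) (g := g) (k := k) (i := g - k - i - 1) (by omega)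
        omega
    · rw [hσ2]
      simp only [Fin.val_natAdd]
      rw [if_neg (by omega), hlam, pad_of_le _ (by omega)]
      omega
  · intro i hi
    have := hval i (by omega)
    have := hbig i hi
    omega
  · intro i i' hii hi'
    have hlt : (i' : ℕ) < g - k := hi'.trans_le hm
    rw [Fin.lt_def] at hii
    obtain ⟨i, rfl⟩ : ∃ j : Fin (g - k), Fin.castAdd r j = i := ⟨⟨i, by omega⟩, rfl⟩
    obtain ⟨i', rfl⟩ : ∃ j : Fin (g - k), Fin.castAdd r j = i' := ⟨⟨i', by omega⟩, rfl⟩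
    rw [hσ1, hσ1, Fin.lt_def]
    simp only [Fin.val_castAdd] at hii hi' ⊢
    have h1 := hbig i' hi'
    have h2 := wstar_lt_wstar (G := G) hii
    rw [hπ i, hπ i', if_pos hi', if_pos (by omega)]
    omega

end GapSequence

lemma schur_pad {l n : ℕ} (lam : Fin l → ℕ) (h : n = l) :
    schur (fun a : Fin n => pad lam a) = schur lam := by
  subst h
  congr 1
  ext1 a
  exact dif_pos a.isLt

lemma evalPS_derivsCoeff_tauCoeff {l : ℕ} (lam : Fin l → ℕ) (ξ : Ptn → ℂ) (k : ℕ) (L : List ℕ)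
    (γ : Fin k →₀ ℕ) :
    evalPS k (derivsCoeff L (tauCoeff lam ξ)) γ
      = coeff γ (substPsum k (L.foldr (fun i p => pderiv i p) (schur lam)))
        + ∑ᶠ (μ : Ptn) (_ : PtnGt lam μ),
          ξ μ * coeff γ (substPsum k (L.foldr (fun i p => pderiv i p) μ.schurP)) :=
  evalPS_derivsCoeff_series k L γ (schur lam) (PtnGt lam) ξ Ptn.schurP
    (fun μ => ∑ a : Fin μ.len, μ.toFun a) (fun _ _ => schur_isWeightedHomogeneous _)
    (Ptn.finite_size_eq _)

lemma evalPS_tauKCoeff {l : ℕ} (lam : Fin l → ℕ) (ξ : Ptn → ℂ) {k : ℕ} (hk : k ≤ l)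
    (n : ℕ) (γ : Fin n →₀ ℕ) :
    evalPS n (tauKCoeff lam ξ k) γ
      = coeff γ (substPsum n (schur fun a : Fin k => pad lam a))
        + ∑ᶠ (μ : Ptn) (_ : PtnGt lam μ ∧ ∀ i, k ≤ i → μ.toFun i = pad lam i),
          ξ μ * coeff γ (substPsum n (schur fun a : Fin k => μ.toFun a)) :=
  evalPS_derivsCoeff_series n [] γ (schur fun a : Fin k => pad lam a)
    (fun μ => PtnGt lam μ ∧ ∀ i, k ≤ i → μ.toFun i = pad lam i) ξ
    (fun μ => schur fun a : Fin k => μ.toFun a)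
    (fun μ => ∑ a : Fin k, μ.toFun a) (fun _ _ => schur_isWeightedHomogeneous _)
    (Ptn.finite_head_size_eq _ k l (pad lam) (pad_of_le lam le_rfl) hk fun _ h => h.2)

lemma tauKCoeff_index_iff {l : ℕ} (lam : Fin l → ℕ) (n : ℕ) (μ : Ptn) :
    (PtnGt lam μ ∧ ∀ i, n ≤ i → μ.toFun i = pad lam i)
      ↔ (PtnGt lam μ ∧ ∀ i, n + 1 ≤ i → μ.toFun i = pad lam i) ∧ μ.toFun n = pad lam n := by
  constructor
  · exact fun h => ⟨⟨h.1, fun i hi => h.2 i (by omega)⟩, h.2 n le_rfl⟩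
  · rintro ⟨⟨h1, h2⟩, h3⟩
    refine ⟨h1, fun i hi => ?_⟩
    rcases hi.eq_or_lt with rfl | hi
    · exact h3
    · exact h2 i hi

theorem evalPS_tauKCoeff_of_lt {l : ℕ} (lam : Fin l → ℕ) (hlam : Antitone (pad lam))
    (ξ : Ptn → ℂ) {n : ℕ} (hn : n + 1 ≤ l) (γ : Fin (n + 1) →₀ ℕ)
    (hγ : γ (Fin.last n) < pad lam n) :
    evalPS (n + 1) (tauKCoeff lam ξ (n + 1)) γ = 0 := by
  classical
  rw [evalPS_tauKCoeff _ ξ hn, coeff_substPsum_schur_of_lt _ (fun i hi => hlam hi) γ hγ, zero_add]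
  refine finsum_eq_zero_of_forall_eq_zero fun μ => ?_
  rw [finsum_eq_if]
  refine ite_eq_right_iff.mpr fun hμ => ?_
  rw [coeff_substPsum_schur_of_lt _ (fun i hi => μ.anti i n hi) γ (hγ.trans_le (hμ.1.1 n)),
    mul_zero]

theorem evalPS_tauKCoeff_last {l : ℕ} (lam : Fin l → ℕ) (hlam : Antitone (pad lam))
    (ξ : Ptn → ℂ) {n : ℕ} (hn : n + 1 ≤ l) (δ : Fin n →₀ ℕ) :
    evalPS (n + 1) (tauKCoeff lam ξ (n + 1))
        (Finsupp.mapDomain Fin.castSucc δ + Finsupp.single (Fin.last n) (pad lam n))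
      = evalPS n (tauKCoeff lam ξ n) δ := by
  classical
  have hval : (Finsupp.mapDomain Fin.castSucc δ + Finsupp.single (Fin.last n) (pad lam n))
      (Fin.last n) = pad lam n := by
    rw [Finsupp.add_apply, Finsupp.mapDomain_of_notMem_range, Finsupp.single_eq_same, zero_add]
    rintro ⟨i, hi⟩
    exact Fin.castSucc_ne_last i hi
  rw [evalPS_tauKCoeff _ ξ hn, evalPS_tauKCoeff _ ξ (n.le_succ.trans hn),
    coeff_substPsum_schur_last _ fun i hi => hlam hi]
  congr 1
  refine finsum_congr fun μ => ?_
  rw [finsum_eq_if, finsum_eq_if]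
  by_cases hμ : PtnGt lam μ ∧ ∀ i, n + 1 ≤ i → μ.toFun i = pad lam i
  · rw [if_pos hμ]
    by_cases h : μ.toFun n = pad lam n
    · rw [if_pos ((tauKCoeff_index_iff lam n μ).mpr ⟨hμ, h⟩), ← h,
        coeff_substPsum_schur_last _ fun i hi => μ.anti i n hi]
    · rw [if_neg fun h' => h (h'.2 n le_rfl),
        coeff_substPsum_schur_of_lt _ (fun i hi => μ.anti i n hi), mul_zero]
      rw [hval]
      exact lt_of_le_of_ne (hμ.1.1 n) (Ne.symm h)
  · rw [if_neg hμ, if_neg fun h' => hμ ((tauKCoeff_index_iff lam n μ).mp h').1]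

section GapSequence

variable {g : ℕ} {G : Finset ℕ}

theorem evalPS_derivsCoeff_gapa (hcard : G.card = g) (ξ : Ptn → ℂ) {k : ℕ} (hk : k ≤ g)
    (π : Equiv.Perm (Fin (g - k)))
    (hπ : ∀ j : Fin (g - k), ((π j : ℕ))
        = g - k - 1 - (if (j : ℕ) < gapm G g k then wstar G j
            else wseq G (g - k - (j : ℕ) - 1))) (γ : Fin k →₀ ℕ) :
    evalPS k (derivsCoeff ((List.range (gapm G g k)).map (gapa G g k))
        (tauCoeff (fun a : Fin g => gapPart G g a) ξ)) γ
      = ((Equiv.Perm.sign π : ℤ) : ℂ)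
          * evalPS k (tauKCoeff (fun a : Fin g => gapPart G g a) ξ k) γ := by
  classical
  have hsgn : ∀ Q : MvPolynomial (Fin k) ℂ,
      coeff γ (((Equiv.Perm.sign π : ℤ) : MvPolynomial (Fin k) ℂ) * Q)
        = ((Equiv.Perm.sign π : ℤ) : ℂ) * coeff γ Q := by
    intro Q
    rw [← map_intCast (C : ℂ →+* MvPolynomial (Fin k) ℂ), coeff_C_mul]
  rw [evalPS_derivsCoeff_tauCoeff, evalPS_tauKCoeff _ ξ hk, mul_add, ← smul_eq_mul (b := finsum _),
    smul_finsum]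
  congr 1
  · have h := substPsum_foldr_gapa hcard hk π hπ _ (pad_gapPart_antitone hcard) (fun _ => le_rfl) 0
      fun i hi => pad_of_le _ hi
    rw [if_pos fun _ _ => rfl] at h
    rw [← hsgn, ← h, schur_pad _ (show k + (g - k + 0) = g by omega)]
  · refine finsum_congr fun μ => ?_
    rw [smul_finsum]
    by_cases hμ : PtnGt (fun a : Fin g => gapPart G g a) μ
    · rw [finsum_eq_if, if_pos hμ, μ.schurP_eq (n := k + (g - k + μ.len)) (by omega),
        substPsum_foldr_gapa hcard hk π hπ _ (fun i j h => μ.anti i j h) hμ.1 μ.len fun i hi => by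
          have := μ.anti μ.len i (by omega)
          have := μ.toFun_len
          omega]
      split_ifs with h
      · rw [finsum_eq_if, if_pos ⟨hμ, h⟩, hsgn, smul_eq_mul]
        ring
      · rw [finsum_eq_if, if_neg fun h' => h h'.2, coeff_zero, mul_zero]
    · rw [finsum_eq_if, if_neg hμ, finsum_eq_if, if_neg fun h => hμ h.1]

end GapSequence

/-- Let `λ` be the partition associated to a gap sequence `G` of genus
`g`, `ξ_μ ∈ ℂ` arbitrary, `τ(t) = s_λ(t) + Σ_{λ<μ} ξ_μ s_μ(t)` and, for `0 ≤ k ≤ g`,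
`τ^{(k)}(t) = s_{(λ_1,...,λ_k)}(t) + Σ_μ ξ_μ s_{(μ_1,...,μ_k)}(t)` (the sum over
partitions `μ` with `λ < μ` and `μ_i = λ_i` for `i ≥ k+1`). Then:
(i) `∂_{a^{(k)}_1} ⋯ ∂_{a^{(k)}_{m_k}} τ` at `t = [x_1]+⋯+[x_k]` equals
`c_k · τ^{(k)}([x_1]+⋯+[x_k])` as formal power series in `x_1,...,x_k`, with `c_k` the
sign of the permutation `π` of `{0,...,g-k-1}` determined by
`(w_1^*,...,w_{m_k}^*, w_{g-k-m_k},...,w_1)` via `π j = g-k-1 - v_j`;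
(ii) for `1 ≤ k ≤ g`,
`τ^{(k)}([x_1]+⋯+[x_k]) = τ^{(k-1)}([x_1]+⋯+[x_{k-1}])·x_k^{λ_k} + O(x_k^{λ_k+1})`:
coefficients of `x_k`-degree `< λ_k` vanish, and the coefficient of `x_k^{λ_k}` is the
corresponding coefficient of `τ^{(k-1)}([x_1]+⋯+[x_{k-1}])`. -/
theorem statement18 (g : ℕ) (hg : 1 ≤ g) (G : Finset ℕ)
    (hcard : G.card = g) (h0 : 0 ∉ G)
    (hadd : ∀ a b : ℕ, a ∉ G → b ∉ G → a + b ∉ G)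
    (ξ : Ptn → ℂ) (k : ℕ) (hk : k ≤ g)
    (π : Equiv.Perm (Fin (g - k)))
    (hπ : ∀ j : Fin (g - k), ((π j : ℕ))
        = g - k - 1 - (if (j : ℕ) < gapm G g k then wstar G j
            else wseq G (g - k - (j : ℕ) - 1))) :
    (∀ γ : Fin k →₀ ℕ,
      evalPS k (derivsCoeff ((List.range (gapm G g k)).map (gapa G g k))
          (tauCoeff (fun a : Fin g => gapPart G g a) ξ)) γ
        = ((Equiv.Perm.sign π : ℤ) : ℂ)
            * evalPS k (tauKCoeff (fun a : Fin g => gapPart G g a) ξ k) γ)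
    ∧ (∀ h1 : 1 ≤ k,
        (∀ γ : Fin k →₀ ℕ, γ ⟨k - 1, by omega⟩ < gapPart G g (k - 1) →
          evalPS k (tauKCoeff (fun a : Fin g => gapPart G g a) ξ k) γ = 0)
        ∧ (∀ δ : Fin (k - 1) →₀ ℕ,
            evalPS k (tauKCoeff (fun a : Fin g => gapPart G g a) ξ k)
                (Finsupp.mapDomain (Fin.castLE (by omega)) δ
                  + Finsupp.single ⟨k - 1, by omega⟩ (gapPart G g (k - 1)))
              = evalPS (k - 1)
                  (tauKCoeff (fun a : Fin g => gapPart G g a) ξ (k - 1)) δ)) := by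
  refine ⟨fun γ => evalPS_derivsCoeff_gapa hcard ξ hk π hπ γ, fun h1 => ?_⟩
  obtain ⟨n, rfl⟩ : ∃ n, k = n + 1 := ⟨k - 1, by omega⟩
  have hpad : gapPart G g n = pad (fun a : Fin g => gapPart G g a) n :=
    (pad_gapPart_of_lt hk).symm
  simp only [Nat.add_sub_cancel]
  rw [hpad]
  exact ⟨fun γ hγ => evalPS_tauKCoeff_of_lt _ (pad_gapPart_antitone hcard) ξ hk γ hγ,
    fun δ => evalPS_tauKCoeff_last _ (pad_gapPart_antitone hcard) ξ hk δ⟩
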